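/- arXiv:2108.00060 — 3 statements merged into one kernel-verified Lean document; each statement's English description precedes it below -/
import Mathlib

section
/- Let ω ∈ ℝ^ℤ be non-resonant and let H = D_ω + P with P ∈ 𝓕^{≥1} be formally linearizable (i.e. its unique Birkhoff normal form Z_H is zero). If there exists S ∈ 𝓕^{≥1} such that e^{{S,·}} H = D_ω + Z + R with R ∈ 𝓕^{≥d}, Z ∈ 𝓚 and Z supported on pairs with |α|+|β| < d+2, then Z = 0. -/
open scoped BigOperators ENNReal

/-- The index set `ℕ^ℤ_f`: finitely supported functions `ℤ → ℕ`. -/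
abbrev Idx : Type := ℤ →₀ ℕ

/-- Coefficient families of formal Hamiltonians. -/
abbrev Coeffs : Type := Idx → Idx → ℂ

/-- `|α| = ∑_j α_j`. -/
def wt (α : Idx) : ℕ := α.sum fun _ n => n

/-- The momentum `π(α,β) = ∑_j j (α_j - β_j)`. -/
def mom (α β : Idx) : ℤ := (α.sum fun j n => j * (n : ℤ)) - (β.sum fun j n => j * (n : ℤ))

/-- Membership in the space `𝓕` of formal Hamiltonians: vanishing of the
constant and linear coefficients, reality and momentum conservation. -/
def InF (H : Coeffs) : Prop :=
  H 0 0 = 0 ∧ H (Finsupp.single 0 1) 0 = 0 ∧ H 0 (Finsupp.single 0 1) = 0 ∧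
    (∀ α β, H α β = (starRingEnd ℂ) (H β α)) ∧ (∀ α β, mom α β ≠ 0 → H α β = 0)

/-- Membership in `𝓕^{≥d}`: supported on pairs with `|α|+|β| ≥ d+2`. -/
def InFge (d : ℕ) (H : Coeffs) : Prop :=
  InF H ∧ ∀ α β, wt α + wt β < d + 2 → H α β = 0

/-- Membership in `𝓚`: supported on the diagonal `{α = β}`. -/
def InK (H : Coeffs) : Prop := InF H ∧ ∀ α β, α ≠ β → H α β = 0

/-- Membership in `𝓡`: supported off the diagonal. -/
def InR (H : Coeffs) : Prop := InF H ∧ ∀ α, H α α = 0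

/-- A single term of the Poisson-bracket double sum `{F,G}_{α,β}`, indexed by
`x = (j, ((α¹,β¹), (α²,β²)))`: it is
`F_{α¹,β¹} G_{α²,β²} (α¹_j β²_j − β¹_j α²_j)` when `π(α¹,β¹) = π(α²,β²) = 0`,
`α = α¹+α²−e_j` and `β = β¹+β²−e_j`, and `0` otherwise. -/
noncomputable def bracketTerm (F G : Coeffs) (α β : Idx)
    (x : ℤ × (Idx × Idx) × (Idx × Idx)) : ℂ :=
  if mom x.2.1.1 x.2.1.2 = 0 ∧ mom x.2.2.1 x.2.2.2 = 0 ∧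
      α = x.2.1.1 + x.2.2.1 - Finsupp.single x.1 1 ∧
      β = x.2.1.2 + x.2.2.2 - Finsupp.single x.1 1 then
    F x.2.1.1 x.2.1.2 * G x.2.2.1 x.2.2.2 *
      ((x.2.1.1 x.1 : ℂ) * (x.2.2.2 x.1 : ℂ) - (x.2.1.2 x.1 : ℂ) * (x.2.2.1 x.1 : ℂ))
  else 0

/-- The Poisson bracket `{F,G}`, defined coefficientwise by
`{F,G}_{α,β} = i ∑_x bracketTerm F G α β x` (a sum with finitely many
nonzero terms, so the `finsum` gives the intended value). -/
noncomputable def bracket (F G : Coeffs) : Coeffs := fun α β =>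
  Complex.I * ∑ᶠ x : ℤ × (Idx × Idx) × (Idx × Idx), bracketTerm F G α β x

/-- Iterates `ad_G^k`. -/
noncomputable def adPow (G : Coeffs) : ℕ → Coeffs → Coeffs
  | 0, H => H
  | k + 1, H => bracket G (adPow G k H)

/-- The formal symplectic change of variables `e^{{G,·}} = ∑_{k≥0} ad_G^k / k!`;
for `G ∈ 𝓕^{≥1}` each coefficient receives only finitely many nonzero
contributions, so the `finsum` gives the intended value. -/
noncomputable def expAd (G H : Coeffs) : Coeffs := fun α β =>
  ∑ᶠ k : ℕ, ((k.factorial : ℂ))⁻¹ * adPow G k H α β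

/-- The quadratic Hamiltonian `D_ω = ∑_j ω_j |u_j|²`, whose only nonzero
coefficients are `(D_ω)_{e_j,e_j} = ω_j`. -/
noncomputable def Dom (ω : ℤ → ℝ) : Coeffs := fun α β =>
  ∑ᶠ j : ℤ, if α = Finsupp.single j 1 ∧ β = Finsupp.single j 1 then (ω j : ℂ) else 0

/-- Non-resonance: every non-trivial finite integer combination of `ω` is nonzero. -/
def NonResonant (ω : ℤ → ℝ) : Prop :=
  ∀ ℓ : ℤ →₀ ℤ, ℓ ≠ 0 → (ℓ.sum fun j c => ω j * (c : ℝ)) ≠ 0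

/-!
Suppose `e^{{G,·}} H = D_ω` and `e^{{S,·}} H = D_ω + Z + R`. Each variable `u_j` is an eigenvector
of `{D_ω,·}`. As `e^{{G,·}}` and `e^{{S,·}}` are compatible with the Poisson bracket, the series
`w = e^{{S,·}} e^{-{G,·}} u_j` is an eigenvector of `{D_ω + Z + R,·}` with the same eigenvalue, and
`w = u_j + O(2)`. In the eigenvector equation, consider a monomial `u_j u^α ū^α` of degree one less
than the lowest degree of `Z`. The operator `{D_ω,·}` multiplies it by that same eigenvalue, so its
contribution cancels, while `R` and the higher order terms of `w` contribute nothing. What remains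
is the coefficient of `∂Z/∂ū_j`, which is therefore zero. Every nonconstant diagonal monomial of `Z`
is seen by some `∂/∂ū_j`, so the order of `Z` can be raised step by step up to that of `R`.
-/

section OrderRaising

open MvPowerSeries Finset
open Finsupp (degree)

variable {σ K : Type*} [CommRing K]

/-- Linear endomorphisms of a power series ring that strictly raise the order. These are the
operators at which an arbitrary power series in one variable can be evaluated. -/
def RaisesOrder (a : Module.End K (MvPowerSeries σ K)) : Prop :=
  ∀ v, v.order + 1 ≤ (a v).order

/-- The operator `φ(a) = ∑ φₖ aᵏ`. Only finitely many terms contribute to a given coefficient when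
`a` raises the order, so the coefficient of degree `n` is read off the truncation `φ mod Xⁿ⁺¹`. -/
noncomputable def evalEnd (a : Module.End K (MvPowerSeries σ K)) (φ : PowerSeries K) :
    Module.End K (MvPowerSeries σ K) :=
  LinearMap.pi fun γ => coeff γ ∘ₗ Polynomial.aeval a (φ.trunc (degree γ + 1))

variable {a : Module.End K (MvPowerSeries σ K)} (φ ψ : PowerSeries K) (v : MvPowerSeries σ K)
  (γ : σ →₀ ℕ)

lemma coeff_evalEnd :
    coeff γ (evalEnd a φ v) = coeff γ (Polynomial.aeval a (φ.trunc (degree γ + 1)) v) :=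
  rfl

lemma aeval_trunc_apply (a : Module.End K (MvPowerSeries σ K)) (n : ℕ) :
    Polynomial.aeval a (φ.trunc n) v = ∑ k ∈ range n, PowerSeries.coeff k φ • (a ^ k) v := by
  rw [Polynomial.aeval_def, PowerSeries.eval₂_trunc_eq_sum_range, LinearMap.sum_apply]
  rfl

namespace RaisesOrder

variable {φ ψ v γ} (ha : RaisesOrder a)
include ha

lemma le_order_pow (k : ℕ) (v : MvPowerSeries σ K) : v.order + k ≤ ((a ^ k) v).order := by
  induction k with
  | zero => simp
  | succ k ih =>
    rw [pow_succ', Module.End.mul_apply, Nat.cast_succ, ← add_assoc]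
    exact (add_le_add_left ih 1).trans (ha _)

lemma le_order_aeval (p : Polynomial K) (v : MvPowerSeries σ K) :
    v.order ≤ (Polynomial.aeval a p v).order := by
  induction p using Polynomial.induction_on' with
  | add p q hp hq =>
    rw [map_add, LinearMap.add_apply]
    exact (le_min hp hq).trans min_order_le_add
  | monomial n c =>
    rw [Polynomial.aeval_monomial, Module.algebraMap_end_eq_smul_id, smul_mul_assoc,
      LinearMap.smul_apply]
    exact (le_self_add.trans (ha.le_order_pow n v)).trans le_order_smul

lemma coeff_aeval_congr {p q : Polynomial K} {n : ℕ} (hpq : Polynomial.X ^ n ∣ p - q)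
    (hγ : degree γ < v.order + n) :
    coeff γ (Polynomial.aeval a p v) = coeff γ (Polynomial.aeval a q v) := by
  obtain ⟨r, hr⟩ := hpq
  rw [← sub_eq_zero, ← map_sub, ← LinearMap.sub_apply, ← map_sub, hr, mul_comm, map_mul, map_pow,
    Polynomial.aeval_X, Module.End.mul_apply]
  exact coeff_of_lt_order
    (hγ.trans_le ((ha.le_order_pow n v).trans (ha.le_order_aeval r _)))

lemma coeff_evalEnd_eq {n : ℕ} (hγ : degree γ < v.order + n) :
    coeff γ (evalEnd a φ v) = coeff γ (Polynomial.aeval a (φ.trunc n) v) := by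
  refine ha.coeff_aeval_congr (n := min (degree γ + 1) n) ?_ ?_
  · rw [Polynomial.X_pow_dvd_iff]
    intro k hk
    rw [lt_min_iff] at hk
    simp [PowerSeries.coeff_trunc, hk]
  · rcases le_total (degree γ + 1) n with h | h
    · rw [min_eq_left h]
      exact lt_of_lt_of_le (by exact_mod_cast Nat.lt_succ_self _) le_add_self
    · rwa [min_eq_right h]

lemma le_order_evalEnd_sub (φ : PowerSeries K) (v : MvPowerSeries σ K) (n : ℕ) :
    v.order + n ≤ (evalEnd a φ v - Polynomial.aeval a (φ.trunc n) v).order :=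
  le_order fun γ hγ => by rw [map_sub, ha.coeff_evalEnd_eq hγ, sub_self]

lemma le_order_evalEnd (φ : PowerSeries K) (v : MvPowerSeries σ K) :
    v.order ≤ (evalEnd a φ v).order := by
  simpa using ha.le_order_evalEnd_sub φ v 0

lemma evalEnd_mul_apply (φ ψ : PowerSeries K) (v : MvPowerSeries σ K) :
    evalEnd a (φ * ψ) v = evalEnd a φ (evalEnd a ψ v) := by
  ext γ
  set n := degree γ + 1
  have hγ : ((degree γ : ℕ) : ℕ∞) < n := by exact_mod_cast Nat.lt_succ_self _
  have hψ : coeff γ (Polynomial.aeval a (φ.trunc n) (evalEnd a ψ v)) =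
      coeff γ (Polynomial.aeval a (φ.trunc n) (Polynomial.aeval a (ψ.trunc n) v)) := by
    rw [← sub_eq_zero, ← map_sub, ← map_sub]
    exact coeff_of_lt_order (hγ.trans_le
      ((le_add_self.trans (ha.le_order_evalEnd_sub ψ v n)).trans (ha.le_order_aeval _ _)))
  rw [coeff_evalEnd φ, hψ, ← Module.End.mul_apply, ← map_mul, coeff_evalEnd]
  refine ha.coeff_aeval_congr (n := n) (Polynomial.X_pow_dvd_iff.mpr fun k hk => ?_)
    (hγ.trans_le le_add_self)
  rw [Polynomial.coeff_sub, PowerSeries.coeff_trunc, if_pos hk,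
    PowerSeries.coeff_mul_eq_coeff_trunc_mul_trunc φ ψ hk, ← Polynomial.coe_mul,
    Polynomial.coeff_coe, sub_self]

end RaisesOrder

lemma evalEnd_one_apply : evalEnd a 1 v = v := by
  ext γ
  rw [coeff_evalEnd, PowerSeries.trunc_one, map_one, Module.End.one_apply]

lemma evalEnd_smul (c : K) (a : Module.End K (MvPowerSeries σ K)) :
    evalEnd (c • a) φ = evalEnd a (PowerSeries.rescale c φ) := by
  ext v γ
  rw [coeff_evalEnd, coeff_evalEnd, aeval_trunc_apply, aeval_trunc_apply]
  congr 1
  refine sum_congr rfl fun k _ => ?_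
  rw [PowerSeries.coeff_rescale, smul_pow, LinearMap.smul_apply, smul_smul, mul_comm]

variable [Algebra ℚ K]

/-- The exponential `eᵃ` of an order-raising endomorphism. -/
noncomputable def expEnd (a : Module.End K (MvPowerSeries σ K)) :
    Module.End K (MvPowerSeries σ K) :=
  evalEnd a (PowerSeries.exp K)

lemma RaisesOrder.expEnd_neg_expEnd (ha : RaisesOrder a) (v : MvPowerSeries σ K) :
    expEnd (-a) (expEnd a v) = v := by
  rw [expEnd, expEnd, ← neg_one_smul K a, evalEnd_smul, ← ha.evalEnd_mul_apply, mul_comm,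
    ← PowerSeries.evalNegHom, PowerSeries.exp_mul_exp_neg_eq_one, evalEnd_one_apply]

lemma RaisesOrder.le_order_expEnd_sub (ha : RaisesOrder a) (v : MvPowerSeries σ K) :
    v.order + 1 ≤ (expEnd a v - v).order := by
  simpa [expEnd, PowerSeries.trunc_one_left] using ha.le_order_evalEnd_sub (PowerSeries.exp K) v 1

end OrderRaising

section Leibniz

open MvPowerSeries Finset
open Finsupp (degree)

lemma sum_range_sum_range_eq_sum_antidiagonal {A : Type*} [AddCommMonoid A] {n : ℕ}
    {f : ℕ → ℕ → A} (hf : ∀ i j, n ≤ i + j → f i j = 0) :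
    ∑ i ∈ range n, ∑ j ∈ range n, f i j = ∑ k ∈ range n, ∑ p ∈ antidiagonal k, f p.1 p.2 := by
  simp_rw [Nat.sum_antidiagonal_eq_sum_range_succ f, sum_range_diag_flip n f]
  refine sum_congr rfl fun i _ => (sum_subset (range_mono (Nat.sub_le n i)) fun j _ hj => ?_).symm
  exact hf i j (by simp only [mem_range] at hj; lia)

lemma coeff_exp_mul_choose {K : Type*} [CommRing K] [Algebra ℚ K] (i j : ℕ) :
    PowerSeries.coeff (i + j) (PowerSeries.exp K) * ((i + j).choose i : K) =
      PowerSeries.coeff i (PowerSeries.exp K) * PowerSeries.coeff j (PowerSeries.exp K) := by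
  rw [PowerSeries.coeff_exp, PowerSeries.coeff_exp, PowerSeries.coeff_exp,
    ← map_natCast (algebraMap ℚ K), ← map_mul, ← map_mul, Nat.cast_add_choose]
  congr 1
  field_simp

lemma pow_apply_bilinear_eq_sum {K M N P : Type*} [CommSemiring K] [AddCommMonoid M]
    [AddCommMonoid N] [AddCommMonoid P] [Module K M] [Module K N] [Module K P]
    {B : M →ₗ[K] N →ₗ[K] P} {a : Module.End K M} {b : Module.End K N} {c : Module.End K P}
    {W : Set M} (hW : Set.MapsTo a W W)
    (hder : ∀ x ∈ W, ∀ y, c (B x y) = B (a x) y + B x (b y)) {x : M} (hx : x ∈ W) (y : N) (n : ℕ) :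
    (c ^ n) (B x y) =
      ∑ p ∈ antidiagonal n, n.choose p.1 • B ((a ^ p.1) x) ((b ^ p.2) y) := by
  induction n generalizing x y with
  | zero => simp
  | succ n ih =>
    rw [pow_succ, Module.End.mul_apply, hder x hx, map_add, ih (hW hx), ih hx,
      sum_antidiagonal_choose_succ_nsmul (fun i j => B ((a ^ i) x) ((b ^ j) y)) n, add_comm]
    congr 1
    refine sum_congr rfl fun p hp => ?_
    rw [pow_succ a, Module.End.mul_apply,
      Nat.choose_symm_of_eq_add (mem_antidiagonal.mp hp).symm]

variable {σ K : Type*} [CommRing K] {a : Module.End K (MvPowerSeries σ K)}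
  {B : MvPowerSeries σ K →ₗ[K] MvPowerSeries σ K →ₗ[K] MvPowerSeries σ K} {s : ℕ}
  (hB : ∀ x y (γ : σ →₀ ℕ), ((degree γ + s : ℕ) : ℕ∞) < x.order + y.order → coeff γ (B x y) = 0)
  (ha : RaisesOrder a) {x : MvPowerSeries σ K} (hs : s ≤ x.order) (y : MvPowerSeries σ K)

include hB ha hs in
lemma coeff_bilinear_evalEnd (φ ψ : PowerSeries K) (γ : σ →₀ ℕ) {n : ℕ} (hn : degree γ < n) :
    coeff γ (B (evalEnd a φ x) (evalEnd a ψ y)) =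
      coeff γ (B (Polynomial.aeval a (φ.trunc n) x) (Polynomial.aeval a (ψ.trunc n) y)) := by
  set X := Polynomial.aeval a (φ.trunc n) x
  set Y := Polynomial.aeval a (ψ.trunc n) y
  have hsplit : B (evalEnd a φ x) (evalEnd a ψ y) =
      B X Y + (B (evalEnd a φ x - X) (evalEnd a ψ y) + B X (evalEnd a ψ y - Y)) := by
    simp only [map_sub, LinearMap.sub_apply]; abel
  have hγ : ((degree γ + s : ℕ) : ℕ∞) < n + s := by exact_mod_cast Nat.add_lt_add_right hn s
  have hX : (n + s : ℕ∞) ≤ (evalEnd a φ x - X).order + (evalEnd a ψ y).order :=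
    calc (n + s : ℕ∞) ≤ x.order + n := by rw [add_comm]; gcongr
      _ ≤ (evalEnd a φ x - X).order := ha.le_order_evalEnd_sub φ x n
      _ ≤ _ := le_self_add
  have hY : (n + s : ℕ∞) ≤ X.order + (evalEnd a ψ y - Y).order := by
    rw [add_comm]
    exact add_le_add (hs.trans (ha.le_order_aeval _ x))
      (le_add_self.trans (ha.le_order_evalEnd_sub ψ y n))
  rw [hsplit, map_add, map_add, hB _ _ γ (hγ.trans_le hX), hB _ _ γ (hγ.trans_le hY), add_zero,
    add_zero]

include hB ha hs in
lemma coeff_bilinear_aeval_trunc (φ ψ : PowerSeries K) (γ : σ →₀ ℕ) {n : ℕ} (hn : degree γ < n) :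
    coeff γ (B (Polynomial.aeval a (φ.trunc n) x) (Polynomial.aeval a (ψ.trunc n) y)) =
      ∑ k ∈ range n, ∑ p ∈ antidiagonal k,
        PowerSeries.coeff p.1 φ * PowerSeries.coeff p.2 ψ *
          coeff γ (B ((a ^ p.1) x) ((a ^ p.2) y)) := by
  rw [← sum_range_sum_range_eq_sum_antidiagonal (f := fun i j =>
    PowerSeries.coeff i φ * PowerSeries.coeff j ψ * coeff γ (B ((a ^ i) x) ((a ^ j) y)))]
  · simp only [aeval_trunc_apply, map_sum, map_smul, LinearMap.sum_apply, LinearMap.smul_apply,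
      smul_eq_mul, mul_sum]
    rw [sum_comm]
    exact sum_congr rfl fun i _ => sum_congr rfl fun j _ => by ring
  · intro i j hij
    have hγ : ((degree γ + s : ℕ) : ℕ∞) < (s + i : ℕ) + j := by exact_mod_cast (by lia)
    rw [hB _ _ γ (hγ.trans_le ?_), mul_zero]
    push_cast
    exact add_le_add ((add_le_add_left hs _).trans (ha.le_order_pow i x))
      (le_add_self.trans (ha.le_order_pow j y))

include hB ha hs in
theorem expEnd_apply_bilinear [Algebra ℚ K] {W : Set (MvPowerSeries σ K)} (hW : Set.MapsTo a W W)
    (hder : ∀ x ∈ W, ∀ y, a (B x y) = B (a x) y + B x (a y)) (hx : x ∈ W) :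
    expEnd a (B x y) = B (expEnd a x) (expEnd a y) := by
  ext γ
  have hγ : degree γ < degree γ + 1 := Nat.lt_succ_self _
  rw [expEnd, coeff_bilinear_evalEnd hB ha hs y _ _ γ hγ,
    coeff_bilinear_aeval_trunc hB ha hs y _ _ γ hγ, coeff_evalEnd, aeval_trunc_apply, map_sum]
  refine sum_congr rfl fun k _ => ?_
  rw [pow_apply_bilinear_eq_sum hW hder hx y k, map_smul, map_sum, smul_eq_mul, mul_sum]
  refine sum_congr rfl fun p hp => ?_
  obtain rfl := mem_antidiagonal.mp hp
  rw [← coeff_exp_mul_choose, map_nsmul, nsmul_eq_mul, mul_assoc]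

end Leibniz

section PoissonBracket

open MvPowerSeries Finset
open Finsupp (degree single weight)

/-- Exponents of the monomials in the variables `u_j` (index `Sum.inl j`) and `ū_j` (index
`Sum.inr j`): the monomial `u^α ū^β` has exponent `α.sumElim β`. -/
abbrev ModeExponent : Type := (ℤ ⊕ ℤ) →₀ ℕ

/-- The momentum `π(α,β)` as an additive map on exponents. -/
noncomputable def momentum : ModeExponent →+ ℤ := weight (Sum.elim id Neg.neg)

/-- The total absolute momentum `∑_j |j| (α_j + β_j)`. The modes that contribute to a given
coefficient of a Poisson bracket are bounded in terms of it. -/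
noncomputable def absMomentum : ModeExponent →+ ℕ := weight (Sum.elim Int.natAbs Int.natAbs)

/-- The exponent of the action `|u_j|² = u_j ū_j`. -/
noncomputable def actionExponent (j : ℤ) : ModeExponent :=
  single (Sum.inl j) 1 + single (Sum.inr j) 1

lemma momentum_sumElim (α β : Idx) : momentum (α.sumElim β) = mom α β := by
  rw [momentum, Finsupp.weight_apply, Finsupp.sum_sumElim, mom, sub_eq_add_neg, ← Finsupp.sum_neg]
  simp [Function.comp_def, mul_comm]

/-- The exponents of the monomials `u^α ū^α`, the only ones allowed in a normal form. -/
def IsDiagonal (γ : ModeExponent) : Prop := ∀ j, γ (Sum.inl j) = γ (Sum.inr j)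

lemma IsDiagonal.momentum_eq_zero {γ : ModeExponent} (hγ : IsDiagonal γ) : momentum γ = 0 := by
  obtain ⟨⟨α, β⟩, rfl⟩ := Finsupp.sumFinsuppEquivProdFinsupp.symm.surjective γ
  obtain rfl : α = β := Finsupp.ext hγ
  exact (momentum_sumElim α α).trans (sub_self _)

lemma momentum_actionExponent (j : ℤ) : momentum (actionExponent j) = 0 := by
  simp [momentum, actionExponent, Finsupp.weight_single]

lemma absMomentum_actionExponent (j : ℤ) : absMomentum (actionExponent j) = 2 * j.natAbs := by
  simp [absMomentum, actionExponent, Finsupp.weight_single, two_mul]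

lemma degree_actionExponent (j : ℤ) : degree (actionExponent j) = 2 := by
  simp [actionExponent]

lemma natAbs_momentum_le (a : ModeExponent) : (momentum a).natAbs ≤ absMomentum a := by
  induction a using Finsupp.induction_linear with
  | zero => simp
  | add a b ha hb =>
    rw [map_add, map_add]
    exact (Int.natAbs_add_le _ _).trans (add_le_add ha hb)
  | single s n =>
    rcases s with j | j <;> simp [momentum, absMomentum, Finsupp.weight_single, Int.natAbs_mul]

lemma two_mul_natAbs_le_absMomentum {a : ModeExponent} (ha : momentum a = 0) {s : ℤ ⊕ ℤ}
    (hs : a s ≠ 0) : 2 * (Sum.elim Int.natAbs Int.natAbs s) ≤ absMomentum a := by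
  have hle : single s 1 ≤ a := by
    rw [Finsupp.single_le_iff]; exact Nat.one_le_iff_ne_zero.mpr hs
  obtain ⟨b, rfl⟩ := le_iff_exists_add.mp hle
  have hb := natAbs_momentum_le b
  rw [map_add] at ha ⊢
  rcases s with j | j <;>
    simp only [momentum, absMomentum, Finsupp.weight_single, one_smul, Sum.elim_inl,
      Sum.elim_inr, id] at ha hb ⊢ <;> lia

/-- The contribution `a_j b̄_j - ā_j b_j` of the mode `j` to the Poisson bracket of the monomials
with exponents `a` and `b`. -/
def modeSymplectic (j : ℤ) (a b : ModeExponent) : ℤ :=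
  a (Sum.inl j) * b (Sum.inr j) - a (Sum.inr j) * b (Sum.inl j)

lemma natAbs_le_absMomentum_of_modeSymplectic_ne_zero {a b γ : ModeExponent} {j : ℤ}
    (ha : momentum a = 0) (hab : a + b = γ + actionExponent j) (hj : modeSymplectic j a b ≠ 0) :
    j.natAbs ≤ absMomentum γ := by
  have habs : absMomentum a + absMomentum b = absMomentum γ + 2 * j.natAbs := by
    rw [← map_add, hab, map_add, absMomentum_actionExponent]
  have hbound : ∀ s t, a s ≠ 0 → b t ≠ 0 → Sum.elim Int.natAbs Int.natAbs s = j.natAbs →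
      Sum.elim Int.natAbs Int.natAbs t = j.natAbs → j.natAbs ≤ absMomentum γ := by
    intro s t has hbt hs ht
    have h₁ := two_mul_natAbs_le_absMomentum ha has
    have h₂ : Sum.elim Int.natAbs Int.natAbs t ≤ absMomentum b :=
      Finsupp.le_weight_of_ne_zero' _ hbt
    lia
  have hne : a (Sum.inl j) ≠ 0 ∧ b (Sum.inr j) ≠ 0 ∨ a (Sum.inr j) ≠ 0 ∧ b (Sum.inl j) ≠ 0 := by
    contrapose! hj
    rw [modeSymplectic, sub_eq_zero]
    by_cases h₁ : a (Sum.inl j) = 0 <;> by_cases h₂ : a (Sum.inr j) = 0 <;> simp_all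
  rcases hne with h | h <;> exact hbound _ _ h.1 h.2 rfl rfl

variable {K : Type*} [CommRing K]

lemma coeff_X_mul_pderiv {σ : Type*} (s : σ) (F : MvPowerSeries σ K) (a : σ →₀ ℕ) :
    coeff a (X s * pderiv K s F) = a s * coeff a F := by
  rw [X, coeff_monomial_mul]
  split_ifs with h
  · have hs : 1 ≤ a s := Finsupp.single_le_iff.mp h
    rw [coeff_pderiv, tsub_add_cancel_of_le h, Finsupp.tsub_apply, Finsupp.single_eq_same]
    push_cast [hs]
    ring
  · have hs : a s = 0 := by rwa [Finsupp.single_le_iff, Nat.one_le_iff_ne_zero, not_not] at h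
    rw [hs, Nat.cast_zero, zero_mul]

lemma pderiv_pderiv_comm {σ : Type*} (s t : σ) (F : MvPowerSeries σ K) :
    pderiv K s (pderiv K t F) = pderiv K t (pderiv K s F) := by
  rcases eq_or_ne s t with rfl | h
  · rfl
  ext n
  simp only [coeff_pderiv, Finsupp.add_apply, Finsupp.single_eq_of_ne h,
    Finsupp.single_eq_of_ne h.symm, add_zero]
  rw [add_right_comm, mul_right_comm]

variable (K) in
/-- Formal power series in the variables `u_j` and `ū_j`. -/
abbrev ModeSeries : Type _ := MvPowerSeries (ℤ ⊕ ℤ) K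

/-- The mode-`j` part `∂F/∂u_j ∂G/∂ū_j - ∂F/∂ū_j ∂G/∂u_j` of the Poisson bracket. -/
noncomputable def modeBracket (j : ℤ) : ModeSeries K →ₗ[K] ModeSeries K →ₗ[K] ModeSeries K :=
  (LinearMap.mul K _).compl₁₂ (pderiv K (Sum.inl j)).toLinearMap
      (pderiv K (Sum.inr j)).toLinearMap -
    (LinearMap.mul K _).compl₁₂ (pderiv K (Sum.inr j)).toLinearMap
      (pderiv K (Sum.inl j)).toLinearMap

lemma modeBracket_apply (j : ℤ) (F G : ModeSeries K) :
    modeBracket j F G = pderiv K (Sum.inl j) F * pderiv K (Sum.inr j) G -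
      pderiv K (Sum.inr j) F * pderiv K (Sum.inl j) G :=
  rfl

lemma coeff_modeBracket (j : ℤ) (F G : ModeSeries K) (γ : ModeExponent) :
    coeff γ (modeBracket j F G) = ∑ p ∈ antidiagonal (γ + actionExponent j),
      coeff p.1 F * coeff p.2 G * (modeSymplectic j p.1 p.2 : K) := by
  have hX : monomial (actionExponent j) (1 : K) = X (Sum.inl j) * X (Sum.inr j) := by
    rw [X, X, monomial_mul_monomial, one_mul, actionExponent]
  have hmul : monomial (actionExponent j) (1 : K) * modeBracket j F G =
      (X (Sum.inl j) * pderiv K (Sum.inl j) F) * (X (Sum.inr j) * pderiv K (Sum.inr j) G) -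
      (X (Sum.inr j) * pderiv K (Sum.inr j) F) * (X (Sum.inl j) * pderiv K (Sum.inl j) G) := by
    rw [hX, modeBracket_apply]; ring
  rw [← one_mul (coeff γ _), ← coeff_add_monomial_mul (actionExponent j), hmul, map_sub, coeff_mul,
    coeff_mul, ← sum_sub_distrib, add_comm (actionExponent j)]
  refine sum_congr rfl fun p _ => ?_
  simp only [coeff_X_mul_pderiv, modeSymplectic]
  push_cast
  ring

lemma modeBracket_jacobi (j k : ℤ) (F G v : ModeSeries K) :
    (modeBracket j F (modeBracket k G v) - modeBracket j G (modeBracket k F v) -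
        modeBracket j (modeBracket k F G) v) +
      (modeBracket k F (modeBracket j G v) - modeBracket k G (modeBracket j F v) -
        modeBracket k (modeBracket j F G) v) = 0 := by
  simp only [modeBracket_apply]
  simp only [map_sub, Derivation.leibniz, smul_eq_mul,
    pderiv_pderiv_comm (Sum.inl k) (Sum.inl j), pderiv_pderiv_comm (Sum.inl k) (Sum.inr j),
    pderiv_pderiv_comm (Sum.inr k) (Sum.inl j), pderiv_pderiv_comm (Sum.inr k) (Sum.inr j)]
  ring

/-- The Poisson bracket restricted to the finitely many modes `|j| ≤ M`. -/
noncomputable def truncBracket (M : ℕ) : ModeSeries K →ₗ[K] ModeSeries K →ₗ[K] ModeSeries K :=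
  ∑ j ∈ Icc (-(M : ℤ)) M, modeBracket j

lemma coeff_truncBracket (M : ℕ) (F G : ModeSeries K) (γ : ModeExponent) :
    coeff γ (truncBracket M F G) =
      ∑ j ∈ Icc (-(M : ℤ)) M, ∑ p ∈ antidiagonal (γ + actionExponent j),
        coeff p.1 F * coeff p.2 G * (modeSymplectic j p.1 p.2 : K) := by
  simp only [truncBracket, LinearMap.sum_apply, map_sum, coeff_modeBracket]

lemma truncBracket_jacobi [Algebra ℚ K] (M : ℕ) (F G v : ModeSeries K) :
    truncBracket M F (truncBracket M G v) =
      truncBracket M (truncBracket M F G) v + truncBracket M G (truncBracket M F v) := by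
  set t : ℤ → ℤ → ModeSeries K := fun j k => modeBracket j F (modeBracket k G v) -
    modeBracket j G (modeBracket k F v) - modeBracket j (modeBracket k F G) v
  set modes := Icc (-(M : ℤ)) M
  have hdefect : truncBracket M F (truncBracket M G v) - truncBracket M G (truncBracket M F v) -
      truncBracket M (truncBracket M F G) v = ∑ k ∈ modes, ∑ j ∈ modes, t j k := by
    simp only [truncBracket, LinearMap.sum_apply, map_sum, sum_sub_distrib, t, modes]
  have hsymm : ∑ k ∈ modes, ∑ j ∈ modes, t j k + ∑ k ∈ modes, ∑ j ∈ modes, t j k = 0 := by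
    nth_rw 2 [sum_comm]
    simp only [← sum_add_distrib, t, modeBracket_jacobi, sum_const_zero]
  have hzero : ∑ k ∈ modes, ∑ j ∈ modes, t j k = 0 := by
    rw [← one_smul ℚ (∑ k ∈ modes, _), ← inv_mul_cancel₀ (two_ne_zero (α := ℚ)), mul_smul,
      two_smul, hsymm, smul_zero]
  linear_combination hdefect + hzero

/-- The Poisson bracket `∑_j (∂F/∂u_j ∂G/∂ū_j - ∂F/∂ū_j ∂G/∂u_j)`, without the factor `i`. When `F`
has zero momentum, only the modes `|j| ≤ absMomentum γ` contribute to the coefficient `γ`, which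
turns the infinite sum over `j` into a finite one. -/
noncomputable def poissonBracket : ModeSeries K →ₗ[K] ModeSeries K →ₗ[K] ModeSeries K :=
  LinearMap.mk₂ K (fun F G γ => coeff γ (truncBracket (absMomentum γ) F G))
    (fun _ _ _ => funext fun _ => by rw [map_add, LinearMap.add_apply, map_add]; rfl)
    (fun _ _ _ => funext fun _ => by rw [map_smul, LinearMap.smul_apply, map_smul]; rfl)
    (fun _ _ _ => funext fun _ => by rw [map_add, map_add]; rfl)
    (fun _ _ _ => funext fun _ => by rw [map_smul, map_smul]; rfl)

lemma coeff_poissonBracket (F G : ModeSeries K) (γ : ModeExponent) :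
    coeff γ (poissonBracket F G) = coeff γ (truncBracket (absMomentum γ) F G) :=
  rfl

variable (K) in
/-- The power series all of whose monomials have momentum zero. -/
def zeroMomentum : Submodule K (ModeSeries K) where
  carrier := {F | ∀ γ, momentum γ ≠ 0 → coeff γ F = 0}
  add_mem' hF hG γ hγ := by rw [map_add, hF γ hγ, hG γ hγ, add_zero]
  zero_mem' _ _ := map_zero _
  smul_mem' c F hF γ hγ := by rw [map_smul, hF γ hγ, smul_zero]

variable {F G : ModeSeries K}

lemma truncBracket_mem_zeroMomentum (hF : F ∈ zeroMomentum K) (hG : G ∈ zeroMomentum K) (M : ℕ) :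
    truncBracket M F G ∈ zeroMomentum K := by
  intro γ hγ
  rw [coeff_truncBracket]
  refine sum_eq_zero fun j _ => sum_eq_zero fun p hp => ?_
  have hmom := congrArg momentum (mem_antidiagonal.mp hp)
  rw [map_add, map_add, momentum_actionExponent, add_zero] at hmom
  by_cases h : momentum p.1 = 0
  · rw [hG p.2 fun h' => hγ (by rw [← hmom, h, h', add_zero]), mul_zero, zero_mul]
  · rw [hF p.1 h, zero_mul, zero_mul]

lemma poissonBracket_mem_zeroMomentum (hF : F ∈ zeroMomentum K) (hG : G ∈ zeroMomentum K) :
    poissonBracket F G ∈ zeroMomentum K := by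
  intro γ hγ
  rw [coeff_poissonBracket]
  exact truncBracket_mem_zeroMomentum hF hG _ γ hγ

lemma coeff_poissonBracket_eq (hF : F ∈ zeroMomentum K) (G : ModeSeries K) {γ : ModeExponent}
    {M : ℕ} (hM : absMomentum γ ≤ M) :
    coeff γ (poissonBracket F G) = coeff γ (truncBracket M F G) := by
  rw [coeff_poissonBracket, coeff_truncBracket, coeff_truncBracket]
  refine sum_subset (Icc_subset_Icc (by lia) (by lia)) fun j _ hj => sum_eq_zero fun p hp => ?_
  rw [mem_Icc] at hj
  by_cases hp₁ : momentum p.1 = 0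
  · have hsymp : modeSymplectic j p.1 p.2 = 0 := by
      by_contra h
      have := natAbs_le_absMomentum_of_modeSymplectic_ne_zero hp₁ (mem_antidiagonal.mp hp) h
      lia
    rw [hsymp, Int.cast_zero, mul_zero]
  · rw [hF p.1 hp₁, zero_mul, zero_mul]

lemma coeff_truncBracket_congr {F' G' : ModeSeries K} {M : ℕ} {γ : ModeExponent}
    (hF : ∀ a, absMomentum a ≤ absMomentum γ + 2 * M → coeff a F = coeff a F')
    (hG : ∀ a, absMomentum a ≤ absMomentum γ + 2 * M → coeff a G = coeff a G') :
    coeff γ (truncBracket M F G) = coeff γ (truncBracket M F' G') := by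
  rw [coeff_truncBracket, coeff_truncBracket]
  refine sum_congr rfl fun j hj => sum_congr rfl fun p hp => ?_
  have habs := congrArg absMomentum (mem_antidiagonal.mp hp)
  rw [map_add, map_add, absMomentum_actionExponent] at habs
  rw [mem_Icc] at hj
  rw [hF p.1 (by lia), hG p.2 (by lia)]

/-- The coefficient `γ` of an iterated bracket only involves modes `|j| ≤ 3 * absMomentum γ`, so
the identity reduces to the one for truncated brackets. -/
theorem poissonBracket_jacobi [Algebra ℚ K] (hF : F ∈ zeroMomentum K) (hG : G ∈ zeroMomentum K)
    (v : ModeSeries K) :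
    poissonBracket F (poissonBracket G v) =
      poissonBracket (poissonBracket F G) v + poissonBracket G (poissonBracket F v) := by
  ext γ
  set M := 3 * absMomentum γ
  have hright : ∀ {A B : ModeSeries K}, A ∈ zeroMomentum K → B ∈ zeroMomentum K →
      coeff γ (poissonBracket A (poissonBracket B v)) =
        coeff γ (truncBracket M A (truncBracket M B v)) := by
    intro A B hA hB
    rw [← coeff_poissonBracket_eq hA _ (show absMomentum γ ≤ M by lia), coeff_poissonBracket,
      coeff_poissonBracket]
    exact coeff_truncBracket_congr (fun _ _ => rfl)
      fun a ha => coeff_poissonBracket_eq hB v (by lia)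
  have hleft : coeff γ (poissonBracket (poissonBracket F G) v) =
      coeff γ (truncBracket M (truncBracket M F G) v) := by
    rw [← coeff_poissonBracket_eq (truncBracket_mem_zeroMomentum hF hG M) _
      (show absMomentum γ ≤ M by lia), coeff_poissonBracket, coeff_poissonBracket]
    exact coeff_truncBracket_congr (fun a ha => coeff_poissonBracket_eq hF G (by lia))
      fun _ _ => rfl
  rw [map_add, hright hF hG, hright hG hF, hleft, truncBracket_jacobi, map_add]

lemma coeff_poissonBracket_of_lt {γ : ModeExponent}
    (hγ : ((degree γ + 2 : ℕ) : ℕ∞) < F.order + G.order) :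
    coeff γ (poissonBracket F G) = 0 := by
  rw [coeff_poissonBracket, coeff_truncBracket]
  refine sum_eq_zero fun j _ => sum_eq_zero fun p hp => ?_
  have hdeg := congrArg degree (mem_antidiagonal.mp hp)
  rw [map_add, map_add, degree_actionExponent] at hdeg
  rw [← hdeg, Nat.cast_add] at hγ
  rcases lt_or_ge ((degree p.1 : ℕ) : ℕ∞) F.order with h | h
  · rw [coeff_of_lt_order h, zero_mul, zero_mul]
  · have h' : ((degree p.2 : ℕ) : ℕ∞) < G.order := by
      by_contra! hG
      exact absurd hγ (add_le_add h hG).not_gt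
    rw [coeff_of_lt_order h', mul_zero, zero_mul]

lemma raisesOrder_poissonBracket (hF : 3 ≤ F.order) : RaisesOrder (poissonBracket F) := by
  refine fun v => le_order fun γ hγ => coeff_poissonBracket_of_lt ?_
  have hlt : ((degree γ + 2 : ℕ) : ℕ∞) < v.order + 1 + 2 := by
    push_cast
    exact (WithTop.add_lt_add_iff_right (by decide)).mpr hγ
  calc ((degree γ + 2 : ℕ) : ℕ∞) < v.order + 1 + 2 := hlt
    _ = 3 + v.order := by rw [add_assoc, add_comm]; rfl
    _ ≤ F.order + v.order := by gcongr

lemma poissonBracket_expEnd [Algebra ℚ K] {H : ModeSeries K} (hF : F ∈ zeroMomentum K)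
    (hF3 : 3 ≤ F.order) (hH : H ∈ zeroMomentum K) (hH2 : 2 ≤ H.order) (v : ModeSeries K) :
    poissonBracket (expEnd (poissonBracket F) H) (expEnd (poissonBracket F) v) =
      expEnd (poissonBracket F) (poissonBracket H v) :=
  (expEnd_apply_bilinear (s := 2) (fun _ _ _ => coeff_poissonBracket_of_lt)
    (raisesOrder_poissonBracket hF3) hH2 v (W := zeroMomentum K)
    (fun _ hx => poissonBracket_mem_zeroMomentum hF hx)
    (fun _ hx y => poissonBracket_jacobi hF hx y) hH).symm

end PoissonBracket

section LowestOrder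

open MvPowerSeries Finset
open Finsupp (degree single)

variable {K : Type*} [CommRing K]

/-- The quadratic Hamiltonian `∑_j ω_j u_j ū_j`. -/
noncomputable def quadraticSeries (ω : ℤ → K) : ModeSeries K := fun γ =>
  ∑ᶠ j, if γ = actionExponent j then ω j else 0

lemma actionExponent_apply (j : ℤ) (s : ℤ ⊕ ℤ) :
    actionExponent j s = if s.elim id id = j then 1 else 0 := by
  rcases s with k | k <;> simp [actionExponent, Finsupp.single_apply, eq_comm]

lemma actionExponent_injective : Function.Injective actionExponent := fun j k h => by
  by_contra hne
  simpa [actionExponent_apply, hne] using DFunLike.congr_fun h (Sum.inl j)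

lemma coeff_quadraticSeries_actionExponent (ω : ℤ → K) (j : ℤ) :
    coeff (actionExponent j) (quadraticSeries ω) = ω j := by
  refine (finsum_eq_single _ j fun k hk => if_neg fun h => hk ?_).trans (if_pos rfl)
  exact (actionExponent_injective h).symm

lemma coeff_quadraticSeries_of_ne (ω : ℤ → K) {γ : ModeExponent}
    (hγ : ∀ j, γ ≠ actionExponent j) : coeff γ (quadraticSeries ω) = 0 :=
  finsum_eq_zero_of_forall_eq_zero fun j => if_neg (hγ j)

lemma quadraticSeries_mem_zeroMomentum (ω : ℤ → K) : quadraticSeries ω ∈ zeroMomentum K :=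
  fun _ hγ => coeff_quadraticSeries_of_ne ω fun j h => hγ (h ▸ momentum_actionExponent j)

lemma two_le_order_quadraticSeries (ω : ℤ → K) : 2 ≤ (quadraticSeries ω).order := by
  refine le_order fun γ hγ => coeff_quadraticSeries_of_ne ω fun j h => hγ.ne ?_
  rw [h, degree_actionExponent, Nat.cast_ofNat]

lemma pderiv_quadraticSeries (ω : ℤ → K) {s t : ℤ ⊕ ℤ} {j : ℤ}
    (hst : actionExponent j = single t 1 + single s 1) :
    pderiv K s (quadraticSeries ω) = ω j • X t := by
  classical
  ext γ
  rw [coeff_pderiv, coeff_smul, coeff_X]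
  have hs : s.elim id id = j := by
    by_contra hne
    simpa [actionExponent_apply, hne] using DFunLike.congr_fun hst s
  split_ifs with hγ
  · have ht : single t 1 s = 0 := by
      simpa [actionExponent_apply, hs] using DFunLike.congr_fun hst s
    rw [hγ, ← hst, coeff_quadraticSeries_actionExponent, ht, Nat.cast_zero, zero_add]
  · rw [coeff_quadraticSeries_of_ne, zero_mul, mul_zero]
    intro k hk
    obtain rfl : j = k := by
      by_contra hne
      simpa [actionExponent_apply, hs, hne] using DFunLike.congr_fun hk s
    exact hγ (add_right_cancel (hk.trans hst))

lemma poissonBracket_X {Z : ModeSeries K} (hZ : Z ∈ zeroMomentum K) (j : ℤ) :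
    poissonBracket Z (X (Sum.inl j)) = -pderiv K (Sum.inr j) Z := by
  classical
  ext γ
  have hM : j ∈ Icc (-((absMomentum γ + j.natAbs : ℕ) : ℤ)) (absMomentum γ + j.natAbs : ℕ) := by
    rw [mem_Icc]; lia
  rw [coeff_poissonBracket_eq hZ _ (Nat.le_add_right _ j.natAbs), truncBracket,
    LinearMap.sum_apply, LinearMap.sum_apply, sum_eq_single_of_mem j hM fun k _ hk => ?_]
  · rw [modeBracket_apply, pderiv_X_self, pderiv_X_of_ne Sum.inl_ne_inr, mul_zero, mul_one,
      zero_sub]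
  · rw [modeBracket_apply, pderiv_X_of_ne Sum.inl_ne_inr,
      pderiv_X_of_ne (Sum.inl_injective.ne hk.symm), mul_zero, mul_zero, sub_zero]

lemma modeBracket_quadraticSeries (ω : ℤ → K) (j : ℤ) (v : ModeSeries K) :
    modeBracket j (quadraticSeries ω) v = ω j • (X (Sum.inr j) * pderiv K (Sum.inr j) v -
      X (Sum.inl j) * pderiv K (Sum.inl j) v) := by
  rw [modeBracket_apply, pderiv_quadraticSeries ω (add_comm _ _), pderiv_quadraticSeries ω rfl,
    smul_mul_assoc, smul_mul_assoc, smul_sub]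

/-- By `hδ`, the exponent `δ` is that of some `u_j u^α ū^α`, which has the same eigenvalue as
`u_j`. -/
lemma coeff_poissonBracket_quadraticSeries (ω : ℤ → K) (v : ModeSeries K) {δ : ModeExponent}
    {j : ℤ} (hδ : IsDiagonal (δ + single (Sum.inr j) 1)) :
    coeff δ (poissonBracket (quadraticSeries ω) v) = -ω j * coeff δ v := by
  have hcoeff (k : ℤ) : coeff δ (modeBracket k (quadraticSeries ω) v) =
      ω k * (δ (Sum.inr k) - δ (Sum.inl k)) * coeff δ v := by
    rw [modeBracket_quadraticSeries, coeff_smul, map_sub, coeff_X_mul_pderiv, coeff_X_mul_pderiv]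
    ring
  have hδj : δ (Sum.inl j) = δ (Sum.inr j) + 1 := by simpa using hδ j
  have hle : j.natAbs ≤ absMomentum δ :=
    Finsupp.le_weight_of_ne_zero' (Sum.elim Int.natAbs Int.natAbs) (s := Sum.inl j)
      (hδj ▸ Nat.succ_ne_zero _)
  have hj : j ∈ Icc (-(absMomentum δ : ℤ)) (absMomentum δ) := by rw [mem_Icc]; lia
  rw [coeff_poissonBracket, truncBracket, LinearMap.sum_apply, LinearMap.sum_apply, map_sum,
    sum_eq_single_of_mem j hj fun k _ hk => ?_, hcoeff]
  · rw [hδj]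
    push_cast
    ring
  · have hδk : δ (Sum.inl k) = δ (Sum.inr k) := by
      simpa [Finsupp.single_eq_of_ne (Sum.inr_injective.ne hk)] using hδ k
    rw [hcoeff, hδk, sub_self, mul_zero, zero_mul]

lemma poissonBracket_quadraticSeries_X (ω : ℤ → K) (j : ℤ) :
    poissonBracket (quadraticSeries ω) (X (Sum.inl j)) = -ω j • X (Sum.inl j) := by
  rw [poissonBracket_X (quadraticSeries_mem_zeroMomentum ω), pderiv_quadraticSeries ω rfl, neg_smul]

lemma exists_eq_add_single_inr {γ : ModeExponent} (hγ : IsDiagonal γ) (h0 : γ ≠ 0) :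
    ∃ δ j, γ = δ + single (Sum.inr j) 1 := by
  obtain ⟨s, hs⟩ := Finsupp.ne_iff.mp h0
  obtain ⟨j, hj⟩ : ∃ j, γ (Sum.inr j) ≠ 0 := by
    rcases s with j | j
    · exact ⟨j, hγ j ▸ hs⟩
    · exact ⟨j, hs⟩
  have hle : single (Sum.inr j) 1 ≤ γ :=
    Finsupp.single_le_iff.mpr (Nat.one_le_iff_ne_zero.mpr hj)
  exact ⟨γ - single (Sum.inr j) 1, j, (tsub_add_cancel_of_le hle).symm⟩

lemma one_le_order_X {σ : Type*} (s : σ) : 1 ≤ (X s : MvPowerSeries σ K).order := by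
  classical
  refine le_order fun γ hγ => ?_
  rw [coeff_X, if_neg]
  rintro rfl
  simp at hγ

variable [Algebra ℚ K]

lemma coeff_eq_zero_of_coeff_pderiv {σ : Type*} {s : σ} {F : MvPowerSeries σ K} {δ : σ →₀ ℕ}
    (h : coeff δ (pderiv K s F) = 0) : coeff (δ + single s 1) F = 0 := by
  have := IsAddTorsionFree.of_module_rat K
  rw [coeff_pderiv, mul_comm, ← Nat.cast_succ, ← nsmul_eq_mul] at h
  exact (nsmul_eq_zero_iff_right (δ s).succ_ne_zero).mp h

variable {ω : ℤ → K} {Z R : ModeSeries K}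

lemma coeff_eq_zero_of_poissonBracket_eq_smul {n : ℕ} {j : ℤ} {w : ModeSeries K}
    {δ : ModeExponent} (hZ : Z ∈ zeroMomentum K) (hZn : n ≤ Z.order) (hR : (n + 1 : ℕ) ≤ R.order)
    (hw : 2 ≤ (w - X (Sum.inl j)).order)
    (heig : poissonBracket (quadraticSeries ω + Z + R) w = -ω j • w)
    (hδ : IsDiagonal (δ + single (Sum.inr j) 1)) (hδn : degree (δ + single (Sum.inr j) 1) = n) :
    coeff (δ + single (Sum.inr j) 1) Z = 0 := by
  rw [map_add, Finsupp.degree_single] at hδn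
  have hw1 : 1 ≤ w.order := by
    rw [← sub_add_cancel w (X (Sum.inl j))]
    exact (le_min (one_le_two.trans hw) (one_le_order_X _)).trans min_order_le_add
  have hsplit : poissonBracket (quadraticSeries ω + Z + R) w = poissonBracket (quadraticSeries ω) w
      + poissonBracket Z (X (Sum.inl j)) + poissonBracket Z (w - X (Sum.inl j))
      + poissonBracket R w := by
    simp only [map_add, map_sub, LinearMap.add_apply]; abel
  have hZw : coeff δ (poissonBracket Z (w - X (Sum.inl j))) = 0 :=
    coeff_poissonBracket_of_lt (lt_of_lt_of_le (by exact_mod_cast (by lia)) (add_le_add hZn hw))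
  have hRw : coeff δ (poissonBracket R w) = 0 :=
    coeff_poissonBracket_of_lt (lt_of_lt_of_le (by exact_mod_cast (by lia)) (add_le_add hR hw1))
  have hcoeff := congrArg (coeff δ) (hsplit.symm.trans heig)
  rw [map_add, map_add, map_add, coeff_poissonBracket_quadraticSeries ω w hδ, hZw, hRw,
    poissonBracket_X hZ, map_neg, coeff_smul] at hcoeff
  exact coeff_eq_zero_of_coeff_pderiv (by linear_combination -hcoeff)

lemma le_order_of_poissonBracket_eq_smul (hZ : ∀ γ, ¬ IsDiagonal γ → coeff γ Z = 0)
    (hZ0 : coeff 0 Z = 0) {d : ℕ} (hR : d ≤ R.order)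
    (heig : ∀ j, ∃ w, 2 ≤ (w - X (Sum.inl j)).order ∧
      poissonBracket (quadraticSeries ω + Z + R) w = -ω j • w) :
    d ≤ Z.order := by
  have hZmem : Z ∈ zeroMomentum K := fun γ hγ => hZ γ fun h => hγ h.momentum_eq_zero
  suffices ∀ n ≤ d, (n : ℕ∞) ≤ Z.order from this d le_rfl
  intro n hn
  induction n with
  | zero => exact zero_le
  | succ n ih =>
    have hZn := ih (by lia)
    refine le_order fun γ hγ => ?_
    rcases (Nat.lt_succ_iff.mp (Nat.cast_lt.mp hγ)).lt_or_eq with hlt | hdeg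
    · exact coeff_of_lt_order ((Nat.cast_lt.mpr hlt).trans_le hZn)
    by_cases hdiag : IsDiagonal γ
    · rcases eq_or_ne γ 0 with rfl | hγ0
      · exact hZ0
      · obtain ⟨δ, j, rfl⟩ := exists_eq_add_single_inr hdiag hγ0
        obtain ⟨w, hw, hwj⟩ := heig j
        exact coeff_eq_zero_of_poissonBracket_eq_smul hZmem hZn ((Nat.cast_le.mpr hn).trans hR) hw
          hwj hdiag hdeg
    · exact hZ γ hdiag

lemma exists_poissonBracket_eq_smul {G S H : ModeSeries K} (hG : G ∈ zeroMomentum K)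
    (hG3 : 3 ≤ G.order) (hS : S ∈ zeroMomentum K) (hS3 : 3 ≤ S.order) (hH : H ∈ zeroMomentum K)
    (hGH : expEnd (poissonBracket G) H = quadraticSeries ω) (j : ℤ) :
    ∃ w, 2 ≤ (w - X (Sum.inl j)).order ∧
      poissonBracket (expEnd (poissonBracket S) H) w = -ω j • w := by
  set u : ModeSeries K := X (Sum.inl j)
  have hadG := raisesOrder_poissonBracket hG3
  have hadG' : RaisesOrder (poissonBracket (-G)) :=
    raisesOrder_poissonBracket (by rwa [order_neg])
  have hadS := raisesOrder_poissonBracket hS3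
  have hHD : H = expEnd (poissonBracket (-G)) (quadraticSeries ω) := by
    rw [map_neg, ← hGH, hadG.expEnd_neg_expEnd]
  have hH2 : 2 ≤ H.order := by
    rw [hHD]
    exact (two_le_order_quadraticSeries ω).trans (hadG'.le_order_evalEnd _ _)
  set w := expEnd (poissonBracket (-G)) u
  have hw : poissonBracket H w = -ω j • w := by
    rw [hHD, poissonBracket_expEnd (neg_mem hG) (by rwa [order_neg])
      (quadraticSeries_mem_zeroMomentum ω) (two_le_order_quadraticSeries ω),
      poissonBracket_quadraticSeries_X, map_smul]
  have hwu : 2 ≤ (w - u).order :=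
    (add_le_add_left (one_le_order_X _) 1).trans (hadG'.le_order_expEnd_sub u)
  have hw1 : 1 ≤ w.order := (one_le_order_X _).trans (hadG'.le_order_evalEnd _ _)
  refine ⟨expEnd (poissonBracket S) w, ?_, ?_⟩
  · rw [← sub_add_sub_cancel _ w]
    exact (le_min ((add_le_add_left hw1 1).trans (hadS.le_order_expEnd_sub w)) hwu).trans
      min_order_le_add
  · rw [poissonBracket_expEnd hS hS3 hH hH2, hw, map_smul]

theorem le_order_of_expEnd_eq {G S H : ModeSeries K} {d : ℕ} (hG : G ∈ zeroMomentum K)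
    (hG3 : 3 ≤ G.order) (hS : S ∈ zeroMomentum K) (hS3 : 3 ≤ S.order) (hH : H ∈ zeroMomentum K)
    (hGH : expEnd (poissonBracket G) H = quadraticSeries ω)
    (hSH : expEnd (poissonBracket S) H = quadraticSeries ω + Z + R)
    (hZ : ∀ γ, ¬ IsDiagonal γ → coeff γ Z = 0) (hZ0 : coeff 0 Z = 0) (hR : d ≤ R.order) :
    d ≤ Z.order :=
  le_order_of_poissonBracket_eq_smul hZ hZ0 hR
    (hSH ▸ exists_poissonBracket_eq_smul hG hG3 hS hS3 hH hGH)

end LowestOrder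

section Translation

open MvPowerSeries Finset
open Finsupp (degree single)

/-- The pair `(α, β)` encoded by an exponent of `u^α ū^β`. -/
noncomputable def splitExponent : ModeExponent ≃+ Idx × Idx :=
  Finsupp.sumFinsuppAddEquivProdFinsupp

lemma splitExponent_sumElim (α β : Idx) : splitExponent (α.sumElim β) = (α, β) :=
  Finsupp.sumFinsuppAddEquivProdFinsupp.apply_symm_apply (α, β)

lemma splitExponent_actionExponent (j : ℤ) :
    splitExponent (actionExponent j) = (single j 1, single j 1) := by
  rw [← splitExponent_sumElim]
  congr 1
  ext (k | k) <;> simp [actionExponent, Finsupp.single_apply]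

lemma exists_sumElim_eq (γ : ModeExponent) : ∃ α β : Idx, α.sumElim β = γ :=
  ⟨_, _, splitExponent.symm_apply_apply γ⟩

lemma degree_sumElim (α β : Idx) : degree (α.sumElim β) = wt α + wt β :=
  Finsupp.sum_sumElim α β fun _ n => n

/-- The power series `∑ H_{α,β} u^α ū^β` of a formal Hamiltonian. -/
noncomputable def toSeries (H : Coeffs) : ModeSeries ℂ := fun γ =>
  H (splitExponent γ).1 (splitExponent γ).2

lemma coeff_toSeries (H : Coeffs) (γ : ModeExponent) :
    coeff γ (toSeries H) = H (splitExponent γ).1 (splitExponent γ).2 :=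
  rfl

lemma coeff_toSeries_sumElim (H : Coeffs) (α β : Idx) :
    coeff (α.sumElim β) (toSeries H) = H α β := by
  rw [coeff_toSeries, splitExponent_sumElim]

lemma toSeries_add (F G : Coeffs) : toSeries (F + G) = toSeries F + toSeries G := rfl

lemma toSeries_Dom (ω : ℤ → ℝ) : toSeries (Dom ω) = quadraticSeries fun j => (ω j : ℂ) := by
  ext γ
  refine finsum_congr fun j => if_congr ?_ rfl rfl
  rw [← splitExponent.injective.eq_iff, splitExponent_actionExponent, Prod.ext_iff]

/-- Conservation of momentum: `H_{α,β} = 0` unless `π(α,β) = 0`. -/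
def MomentumConserving (H : Coeffs) : Prop := ∀ α β, mom α β ≠ 0 → H α β = 0

/-- `H` has no monomials of degree less than `n`; thus `𝓕^{≥d}` consists of the elements of `𝓕`
vanishing below `d + 2`. -/
def VanishesBelow (n : ℕ) (H : Coeffs) : Prop := ∀ α β, wt α + wt β < n → H α β = 0

lemma MomentumConserving.toSeries_mem {H : Coeffs} (hH : MomentumConserving H) :
    toSeries H ∈ zeroMomentum ℂ := by
  intro γ hγ
  obtain ⟨α, β, rfl⟩ := exists_sumElim_eq γ
  rw [coeff_toSeries_sumElim]
  exact hH α β (momentum_sumElim α β ▸ hγ)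

lemma VanishesBelow.le_order {H : Coeffs} {n : ℕ} (hH : VanishesBelow n H) :
    n ≤ (toSeries H).order := by
  refine nat_le_order fun γ hγ => ?_
  obtain ⟨α, β, rfl⟩ := exists_sumElim_eq γ
  rw [coeff_toSeries_sumElim]
  exact hH α β (degree_sumElim α β ▸ hγ)

lemma vanishesBelow_of_le_order {H : Coeffs} {n : ℕ} (hH : n ≤ (toSeries H).order) :
    VanishesBelow n H := by
  intro α β hαβ
  rw [← coeff_toSeries_sumElim H]
  refine coeff_of_lt_order (lt_of_lt_of_le ?_ hH)
  rw [degree_sumElim]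
  exact_mod_cast hαβ

lemma add_eq_sumElim_add_actionExponent_iff {j : ℤ} {a b : ModeExponent}
    (hj : modeSymplectic j a b ≠ 0) (α β : Idx) :
    a + b = α.sumElim β + actionExponent j ↔
      α = (splitExponent a).1 + (splitExponent b).1 - single j 1 ∧
        β = (splitExponent a).2 + (splitExponent b).2 - single j 1 := by
  have hne : a (Sum.inl j) + b (Sum.inl j) ≠ 0 ∧ a (Sum.inr j) + b (Sum.inr j) ≠ 0 := by
    refine ⟨fun h => hj ?_, fun h => hj ?_⟩ <;>
    · obtain ⟨ha, hb⟩ := Nat.add_eq_zero_iff.mp h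
      simp [modeSymplectic, ha, hb]
  have hle₁ : single j 1 ≤ (splitExponent a).1 + (splitExponent b).1 :=
    Finsupp.single_le_iff.mpr (Nat.one_le_iff_ne_zero.mpr hne.1)
  have hle₂ : single j 1 ≤ (splitExponent a).2 + (splitExponent b).2 :=
    Finsupp.single_le_iff.mpr (Nat.one_le_iff_ne_zero.mpr hne.2)
  rw [← splitExponent.injective.eq_iff, map_add, map_add, splitExponent_sumElim,
    splitExponent_actionExponent, Prod.ext_iff, eq_comm, eq_tsub_iff_add_eq_of_le hle₁,
    eq_tsub_iff_add_eq_of_le hle₂, eq_comm (a := Prod.snd _)]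
  rfl

lemma bracketTerm_splitExponent {F G : Coeffs} (hF : toSeries F ∈ zeroMomentum ℂ)
    (hG : toSeries G ∈ zeroMomentum ℂ) (α β : Idx) (j : ℤ) (a b : ModeExponent) :
    bracketTerm F G α β (j, splitExponent a, splitExponent b) =
      if a + b = α.sumElim β + actionExponent j then
        coeff a (toSeries F) * coeff b (toSeries G) * modeSymplectic j a b else 0 := by
  have hmom {H : Coeffs} (hH : toSeries H ∈ zeroMomentum ℂ) {c : ModeExponent}
      (hc : coeff c (toSeries H) ≠ 0) : mom (splitExponent c).1 (splitExponent c).2 = 0 := by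
    obtain ⟨γ, δ, rfl⟩ := exists_sumElim_eq c
    rw [splitExponent_sumElim, ← momentum_sumElim]
    exact not_not.mp (mt (hH _) hc)
  have hvalue : coeff a (toSeries F) * coeff b (toSeries G) * (modeSymplectic j a b : ℂ) =
      F (splitExponent a).1 (splitExponent a).2 * G (splitExponent b).1 (splitExponent b).2 *
        ((splitExponent a).1 j * (splitExponent b).2 j -
          (splitExponent a).2 j * (splitExponent b).1 j) := by
    rw [modeSymplectic]
    push_cast
    rfl
  rw [bracketTerm, ← hvalue]
  by_cases hab : coeff a (toSeries F) * coeff b (toSeries G) * (modeSymplectic j a b : ℂ) = 0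
  · rw [hab, ite_self, ite_self]
  · have hFG := left_ne_zero_of_mul hab
    have hj := Int.cast_ne_zero.mp (right_ne_zero_of_mul hab)
    refine if_congr ?_ rfl rfl
    rw [add_eq_sumElim_add_actionExponent_iff hj]
    simp only [hmom hF (left_ne_zero_of_mul hFG), hmom hG (right_ne_zero_of_mul hFG), true_and]

lemma toSeries_bracket {F G : Coeffs} (hF : toSeries F ∈ zeroMomentum ℂ)
    (hG : toSeries G ∈ zeroMomentum ℂ) :
    toSeries (bracket F G) = poissonBracket (Complex.I • toSeries F) (toSeries G) := by
  ext γ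
  obtain ⟨α, β, rfl⟩ := exists_sumElim_eq γ
  set e : (_ : ℤ) × ModeExponent × ModeExponent ≃ ℤ × (Idx × Idx) × Idx × Idx :=
    (Equiv.sigmaEquivProd _ _).trans
      ((Equiv.refl ℤ).prodCongr (splitExponent.toEquiv.prodCongr splitExponent.toEquiv))
  set γ := α.sumElim β
  have hterm : ∀ x, bracketTerm F G α β (e x) = if x.2.1 + x.2.2 = γ + actionExponent x.1 then
        coeff x.2.1 (toSeries F) * coeff x.2.2 (toSeries G) * modeSymplectic x.1 x.2.1 x.2.2
      else 0 :=
    fun x => bracketTerm_splitExponent hF hG α β x.1 x.2.1 x.2.2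
  have hsupport : (Function.support fun x => bracketTerm F G α β (e x)) ⊆
      (Icc (-(absMomentum γ : ℤ)) (absMomentum γ)).sigma
        fun j => antidiagonal (γ + actionExponent j) := by
    intro x hx
    rw [Function.mem_support, hterm, ite_ne_right_iff] at hx
    obtain ⟨hsum, hne⟩ := hx
    rw [mem_coe, mem_sigma, mem_Icc]
    have hmom : momentum x.2.1 = 0 := by
      by_contra h
      exact hne (by rw [hF _ h, zero_mul, zero_mul])
    have := natAbs_le_absMomentum_of_modeSymplectic_ne_zero hmom hsum
      (Int.cast_ne_zero.mp (right_ne_zero_of_mul hne))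
    exact ⟨by lia, mem_antidiagonal.mpr hsum⟩
  rw [map_smul, LinearMap.smul_apply, coeff_smul, coeff_poissonBracket, coeff_truncBracket,
    coeff_toSeries_sumElim, bracket, ← finsum_comp_equiv e,
    finsum_eq_sum_of_support_subset _ hsupport, sum_sigma]
  congr 1
  refine sum_congr rfl fun j _ => sum_congr rfl fun p hp => ?_
  rw [hterm, if_pos (mem_antidiagonal.mp hp)]

lemma toSeries_adPow {S H : Coeffs} (hS : toSeries S ∈ zeroMomentum ℂ)
    (hH : toSeries H ∈ zeroMomentum ℂ) (k : ℕ) :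
    toSeries (adPow S k H) = (poissonBracket (Complex.I • toSeries S) ^ k) (toSeries H) ∧
      toSeries (adPow S k H) ∈ zeroMomentum ℂ := by
  induction k with
  | zero => exact ⟨rfl, hH⟩
  | succ k ih =>
    have hsucc : toSeries (adPow S (k + 1) H) =
        poissonBracket (Complex.I • toSeries S) (toSeries (adPow S k H)) := toSeries_bracket hS ih.2
    refine ⟨?_, ?_⟩
    · rw [hsucc, ih.1, pow_succ', Module.End.mul_apply]
    · rw [hsucc]
      exact poissonBracket_mem_zeroMomentum (Submodule.smul_mem _ _ hS) ih.2

lemma toSeries_expAd {S H : Coeffs} (hS : toSeries S ∈ zeroMomentum ℂ)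
    (hS3 : 3 ≤ (toSeries S).order) (hH : toSeries H ∈ zeroMomentum ℂ) :
    toSeries (expAd S H) = expEnd (poissonBracket (Complex.I • toSeries S)) (toSeries H) := by
  ext γ
  have had : RaisesOrder (poissonBracket (Complex.I • toSeries S)) :=
    raisesOrder_poissonBracket (hS3.trans le_order_smul)
  have hcoeff (k : ℕ) : adPow S k H (splitExponent γ).1 (splitExponent γ).2 =
      coeff γ ((poissonBracket (Complex.I • toSeries S) ^ k) (toSeries H)) := by
    rw [← (toSeries_adPow hS hH k).1, coeff_toSeries]
  have hsupport : (Function.support fun k : ℕ => (k.factorial : ℂ)⁻¹ *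
      coeff γ ((poissonBracket (Complex.I • toSeries S) ^ k) (toSeries H))) ⊆
        range (degree γ + 1) := by
    intro k hk
    rw [mem_coe, mem_range]
    by_contra! hle
    refine hk (mul_eq_zero_of_right _ (coeff_of_lt_order (lt_of_lt_of_le ?_
      (le_add_self.trans (had.le_order_pow k _)))))
    exact_mod_cast hle
  rw [coeff_toSeries, expAd]
  simp only [hcoeff]
  rw [finsum_eq_sum_of_support_subset _ hsupport, expEnd, coeff_evalEnd, aeval_trunc_apply, map_sum]
  refine sum_congr rfl fun k _ => ?_
  rw [coeff_smul, PowerSeries.coeff_exp]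
  simp

theorem linearizable_no_low_normal_form_general (ω : ℤ → ℝ) {P S Z R : Coeffs} {d : ℕ}
    (hP : MomentumConserving P)
    (hlin : ∃ G, MomentumConserving G ∧ VanishesBelow 3 G ∧ expAd G (Dom ω + P) = Dom ω)
    (hS : MomentumConserving S) (hS3 : VanishesBelow 3 S) (hZ0 : Z 0 0 = 0)
    (hZ : ∀ α β, α ≠ β → Z α β = 0) (hZlow : ∀ α β, d ≤ wt α + wt β → Z α β = 0)
    (hR : VanishesBelow d R) (heq : expAd S (Dom ω + P) = Dom ω + Z + R) :
    Z = 0 := by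
  obtain ⟨G, hG, hG3, hGP⟩ := hlin
  have hH : toSeries (Dom ω + P) ∈ zeroMomentum ℂ := by
    rw [toSeries_add, toSeries_Dom]
    exact add_mem (quadraticSeries_mem_zeroMomentum _) hP.toSeries_mem
  have hGH := toSeries_expAd hG.toSeries_mem hG3.le_order hH
  have hSH := toSeries_expAd hS.toSeries_mem hS3.le_order hH
  rw [hGP, toSeries_Dom] at hGH
  rw [heq, toSeries_add, toSeries_add, toSeries_Dom] at hSH
  have horder : d ≤ (toSeries Z).order := le_order_of_expEnd_eq
    (Submodule.smul_mem _ _ hG.toSeries_mem) (hG3.le_order.trans le_order_smul)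
    (Submodule.smul_mem _ _ hS.toSeries_mem) (hS3.le_order.trans le_order_smul) hH hGH.symm hSH.symm
    (fun γ hγ => hZ _ _ fun h => hγ (DFunLike.congr_fun h))
    (by simpa [coeff_toSeries] using hZ0) hR.le_order
  funext α β
  rcases lt_or_ge (wt α + wt β) d with h | h
  · exact vanishesBelow_of_le_order horder α β h
  · exact hZlow α β h

end Translation

/-- if `H = D_ω + P` is formally linearizable and some
`S ∈ 𝓕^{≥1}` gives `e^{{S,·}} H = D_ω + Z + R` with `R ∈ 𝓕^{≥d}`, `Z ∈ 𝓚`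
supported on `|α|+|β| < d+2`, then `Z = 0`. -/
theorem linearizable_no_low_normal_form (ω : ℤ → ℝ) (hω : NonResonant ω)
    (P : Coeffs) (hP : InFge 1 P)
    (hlin : ∃ G : Coeffs, InFge 1 G ∧ expAd G (Dom ω + P) = Dom ω)
    (d : ℕ) (S Z R : Coeffs) (hS : InFge 1 S) (hZK : InK Z) (hR : InFge d R)
    (hZlow : ∀ α β : Idx, d + 2 ≤ wt α + wt β → Z α β = 0)
    (heq : expAd S (Dom ω + P) = Dom ω + Z + R) :
    Z = 0 := by
  obtain ⟨G, hG, hGP⟩ := hlin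
  exact linearizable_no_low_normal_form_general ω hP.1.2.2.2.2 ⟨G, hG.1.2.2.2.2, hG.2, hGP⟩
    hS.1.2.2.2.2 hS.2 hZK.1.1 hZK.2 hZlow hR.2 heq
end

section
/- Let ω ∈ ℝ^ℤ be non-resonant and let H₀ = D_ω + P₀ with P₀ ∈ 𝓕^{≥1} be formally linearizable. Define inductively S_i ∈ 𝓡 as the solution of {D_ω, S_i} = Π^𝓡 H_i with Π^𝓚 S_i = 0, and H_{i+1} := e^{{S_i,·}} H_i. Then for every i ≥ 0 one has H_i = D_ω + P_i with P_i ∈ 𝓕^{≥ 2^i}; in particular the scaling order of the perturbation doubles at each step. -/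
open scoped BigOperators ENNReal

/-- The projection `Π^𝓚` onto the diagonal part. -/
def PiK (H : Coeffs) : Coeffs := fun α β => if α = β then H α β else 0

/-- The projection `Π^𝓡` onto the off-diagonal part. -/
def PiR (H : Coeffs) : Coeffs := fun α β => if α = β then 0 else H α β

/-!
Each `ū_j` is an eigenvector of `{D_ω, ·}` with eigenvalue `i ω_j`. By the Jacobi identity
`e^{{G,·}}` is an automorphism of the bracket, so every `H` conjugate to `D_ω`, and hence every
iterate `H_i`, has for each `j` an eigenvector tangent to `ū_j` with this same eigenvalue.

If `H_i = D_ω + P` with `P` of order `d`, the homological equation turns `e^{{S_i,·}} H_i` into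
`D_ω + Π^𝓚 P` up to an error of order `2d`. If the lowest-order part of `Π^𝓚 P` came before this
error, it would perturb the eigenvector equations of `H_{i+1}` at lowest order, where nothing else
can compensate, since `D_ω` and the eigenvalue cancel on the coefficients concerned. Hence
`Π^𝓚 P` is itself of order `2d`.
-/

namespace Coeffs

/-! ### Exponents -/

/-- The momentum `π` as an additive function of the exponent pair `(α, β)`. -/
def momentum : Idx × Idx →+ ℤ where
  toFun a := mom a.1 a.2
  map_zero' := by simp [mom]
  map_add' a b := by
    have sum_add (α β : Idx) : ((α + β).sum fun j n => j * (n : ℤ)) =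
        (α.sum fun j n => j * (n : ℤ)) + β.sum fun j n => j * (n : ℤ) :=
      Finsupp.sum_add_index' (by simp) (by intros; push_cast; ring)
    simp only [mom, Prod.fst_add, Prod.snd_add, sum_add]
    ring

/-- The degree `|α| + |β|` of the monomial with exponent pair `(α, β)`. -/
def degree : Idx × Idx →+ ℕ where
  toFun a := wt a.1 + wt a.2
  map_zero' := by simp [wt]
  map_add' a b := by
    have wt_add (α β : Idx) : wt (α + β) = wt α + wt β :=
      Finsupp.sum_add_index' (fun _ => rfl) (fun _ _ _ => rfl)
    simp only [Prod.fst_add, Prod.snd_add, wt_add]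
    ring

/-- The exponent pair of the variable `u_j`. -/
noncomputable def uExp (j : ℤ) : Idx × Idx := (Finsupp.single j 1, 0)

/-- The exponent pair of the variable `ū_j`. -/
noncomputable def uBarExp (j : ℤ) : Idx × Idx := (0, Finsupp.single j 1)

/-- The exponent pair of `|u_j|² = u_j ū_j`. -/
noncomputable def actionExp (j : ℤ) : Idx × Idx := (Finsupp.single j 1, Finsupp.single j 1)

lemma uExp_add_uBarExp (j : ℤ) : uExp j + uBarExp j = actionExp j := by
  simp [uExp, uBarExp, actionExp]

lemma actionExp_injective : Function.Injective actionExp := fun _ _ h =>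
  Finsupp.single_left_injective one_ne_zero (congrArg Prod.fst h)

@[simp] lemma momentum_uExp (j : ℤ) : momentum (uExp j) = j := by simp [momentum, mom, uExp]

@[simp] lemma momentum_uBarExp (j : ℤ) : momentum (uBarExp j) = -j := by
  simp [momentum, mom, uBarExp]

@[simp] lemma momentum_diag (α : Idx) : momentum (α, α) = 0 := sub_self _

@[simp] lemma momentum_actionExp (j : ℤ) : momentum (actionExp j) = 0 := momentum_diag _

@[simp] lemma momentum_swap (a : Idx × Idx) : momentum a.swap = -momentum a := by
  simp [momentum, mom]

@[simp] lemma degree_uExp (j : ℤ) : degree (uExp j) = 1 := by simp [degree, wt, uExp]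

@[simp] lemma degree_uBarExp (j : ℤ) : degree (uBarExp j) = 1 := by simp [degree, wt, uBarExp]

@[simp] lemma degree_actionExp (j : ℤ) : degree (actionExp j) = 2 := by
  simp [← uExp_add_uBarExp]

lemma uExp_le_iff {j : ℤ} {a : Idx × Idx} : uExp j ≤ a ↔ 1 ≤ a.1 j := by
  simp [uExp, Prod.le_def]

lemma uBarExp_le_iff {j : ℤ} {a : Idx × Idx} : uBarExp j ≤ a ↔ 1 ≤ a.2 j := by
  simp [uBarExp, Prod.le_def]

/-- The symplectic form on the `j`-th components of two exponent pairs: the factor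
`α¹_j β²_j − β¹_j α²_j` of the Poisson bracket. -/
def symp (j : ℤ) (a b : Idx × Idx) : ℂ :=
  (a.1 j : ℂ) * (b.2 j : ℂ) - (a.2 j : ℂ) * (b.1 j : ℂ)

lemma symp_add_right (j : ℤ) (a b c : Idx × Idx) : symp j a (b + c) = symp j a b + symp j a c := by
  simp only [symp, Prod.fst_add, Prod.snd_add, Finsupp.add_apply, Nat.cast_add]; ring

lemma symp_antisymm (j : ℤ) (a b : Idx × Idx) : symp j a b = -symp j b a := by
  simp only [symp]; ring

lemma symp_swap (j : ℤ) (a b : Idx × Idx) : symp j a.swap b.swap = -symp j a b := by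
  simp only [symp, Prod.fst_swap, Prod.snd_swap]; ring

lemma symp_actionExp (j k : ℤ) (a : Idx × Idx) :
    symp k a (actionExp j) = if j = k then (a.1 k : ℂ) - a.2 k else 0 := by
  by_cases h : j = k <;> simp [symp, actionExp, h]

lemma le_of_symp_ne_zero {j : ℤ} {a b : Idx × Idx} (h : symp j a b ≠ 0) :
    (uExp j ≤ a ∧ uBarExp j ≤ b) ∨ (uBarExp j ≤ a ∧ uExp j ≤ b) := by
  simp only [uExp_le_iff, uBarExp_le_iff, Nat.one_le_iff_ne_zero]
  by_contra! hc
  apply h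
  by_cases h₁ : a.1 j = 0 <;> by_cases h₂ : a.2 j = 0 <;> simp_all [symp]

lemma actionExp_le_add {j : ℤ} {a b : Idx × Idx} (h : symp j a b ≠ 0) : actionExp j ≤ a + b := by
  rw [← uExp_add_uBarExp]
  rcases le_of_symp_ne_zero h with ⟨ha, hb⟩ | ⟨ha, hb⟩
  · exact add_le_add ha hb
  · exact add_comm (uBarExp j) _ ▸ add_le_add ha hb

lemma mem_support_of_symp_ne_zero {j : ℤ} {a b : Idx × Idx} (h : symp j a b ≠ 0) :
    j ∈ (a.1 + a.2).support ∧ j ∈ (b.1 + b.2).support := by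
  have := le_of_symp_ne_zero h
  simp only [uExp_le_iff, uBarExp_le_iff] at this
  simp only [Finsupp.mem_support_iff, Finsupp.add_apply]
  omega

/-! ### The Poisson bracket -/

/-- The index triples `(j, a, b)` contributing to the coefficient of exponent `m` in a Poisson
bracket whose first argument has zero momentum. -/
def interactions (m : Idx × Idx) : Set (ℤ × (Idx × Idx) × (Idx × Idx)) :=
  {x | momentum x.2.1 = 0 ∧ m + actionExp x.1 = x.2.1 + x.2.2 ∧ symp x.1 x.2.1 x.2.2 ≠ 0}

-- After removing `u_j` and `ū_j` the exponents `a` and `b` become two summands of `m`, and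
-- conservation of momentum recovers `j` from the first of them.
lemma finite_interactions (m : Idx × Idx) : (interactions m).Finite := by
  let attach (s : ℤ) (p q : ℤ → Idx × Idx) (x : (Idx × Idx) × (Idx × Idx)) :=
    (s * momentum x.1, p (s * momentum x.1) + x.1, q (s * momentum x.1) + x.2)
  have hfin : (Set.Icc 0 m ×ˢ Set.Icc 0 m).Finite := (Set.finite_Icc _ _).prod (Set.finite_Icc _ _)
  refine ((hfin.image (attach (-1) uExp uBarExp)).union
    (hfin.image (attach 1 uBarExp uExp))).subset ?_
  rintro ⟨j, a, b⟩ ⟨hmom, hm, hsymp⟩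
  dsimp only at hmom hm hsymp
  rcases le_of_symp_ne_zero hsymp with ⟨ha, hb⟩ | ⟨ha, hb⟩ <;>
    obtain ⟨a, rfl⟩ := exists_add_of_le ha <;> obtain ⟨b, rfl⟩ := exists_add_of_le hb
  · have hab : m = a + b := add_right_cancel (b := actionExp j) <| by
      rw [hm, ← uExp_add_uBarExp]; abel
    have hj : j = -1 * momentum a := by simp at hmom; linarith
    exact .inl ⟨(a, b), by simp [hab], by simp [attach, ← hj]⟩
  · have hab : m = a + b := add_right_cancel (b := actionExp j) <| by
      rw [hm, ← uExp_add_uBarExp]; abel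
    have hj : j = 1 * momentum a := by simp at hmom; linarith
    exact .inr ⟨(a, b), by simp [hab], by simp [attach, ← hj]⟩

/-- The Poisson bracket `ad F f = {F, f}` as a bilinear map on all formal series. Terms in which
`F` has nonzero momentum are discarded, which keeps the sum finite; `f` is unrestricted, so that
`ad F` also acts on the variables `u_j` and `ū_j`. -/
noncomputable def ad : Coeffs →ₗ[ℂ] Coeffs →ₗ[ℂ] Coeffs :=
  LinearMap.mk₂ ℂ
    (fun F f α β => Complex.I * ∑ x ∈ (finite_interactions (α, β)).toFinset,
      F x.2.1.1 x.2.1.2 * f x.2.2.1 x.2.2.2 * symp x.1 x.2.1 x.2.2)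
    (fun F G f => by
      ext α β
      simp only [Pi.add_apply, ← mul_add, ← Finset.sum_add_distrib, ← add_mul])
    (fun c F f => by
      ext α β
      simp only [Pi.smul_apply, smul_eq_mul, Finset.mul_sum]
      exact Finset.sum_congr rfl fun _ _ => by ring)
    (fun F f g => by
      ext α β
      simp only [Pi.add_apply, ← mul_add, ← Finset.sum_add_distrib, ← add_mul])
    (fun c F f => by
      ext α β
      simp only [Pi.smul_apply, smul_eq_mul, Finset.mul_sum]
      exact Finset.sum_congr rfl fun _ _ => by ring)

lemma ad_apply (F f : Coeffs) (α β : Idx) :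
    ad F f α β = Complex.I * ∑ x ∈ (finite_interactions (α, β)).toFinset,
      F x.2.1.1 x.2.1.2 * f x.2.2.1 x.2.2.2 * symp x.1 x.2.1 x.2.2 := rfl

lemma continuous_ad (F : Coeffs) : Continuous (ad F) :=
  continuous_pi fun α => continuous_pi fun β => by simp only [ad_apply]; fun_prop

lemma continuous_ad_flip (f : Coeffs) : Continuous (ad.flip f) :=
  continuous_pi fun α => continuous_pi fun β => by
    simp only [LinearMap.flip_apply, ad_apply]; fun_prop

lemma ad_apply_eq_zero {F f : Coeffs} {α β : Idx}
    (h : ∀ j (a b : Idx × Idx), momentum a = 0 → (α, β) + actionExp j = a + b →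
      F a.1 a.2 * f b.1 b.2 = 0) : ad F f α β = 0 := by
  rw [ad_apply, Finset.sum_eq_zero, mul_zero]
  intro x hx
  obtain ⟨hmom, hsum, -⟩ := (finite_interactions (α, β)).mem_toFinset.1 hx
  rw [h x.1 x.2.1 x.2.2 hmom hsum, zero_mul]

/-- The series all of whose monomials have zero momentum. -/
def zeroMomentum : Submodule ℂ Coeffs where
  carrier := {F | ∀ α β, mom α β ≠ 0 → F α β = 0}
  zero_mem' _ _ _ := rfl
  add_mem' hF hG α β h := by simp [hF α β h, hG α β h]
  smul_mem' c F hF α β h := by simp [hF α β h]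

/-- The series all of whose monomials have degree at least `n`. -/
def orderGE (n : ℕ) : Submodule ℂ Coeffs where
  carrier := {F | ∀ α β, wt α + wt β < n → F α β = 0}
  zero_mem' _ _ _ := rfl
  add_mem' hF hG α β h := by simp [hF α β h, hG α β h]
  smul_mem' c F hF α β h := by simp [hF α β h]

/-- The series satisfying the reality condition of `𝓕`. -/
def realSeries : Submodule ℝ Coeffs where
  carrier := {F | ∀ α β, F α β = (starRingEnd ℂ) (F β α)}
  zero_mem' _ _ := by simp
  add_mem' hF hG α β := by simp [hF α β, hG α β]
  smul_mem' c F hF α β := by simp [hF α β]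

lemma orderGE_anti {m n : ℕ} (h : m ≤ n) : orderGE n ≤ orderGE m :=
  fun _ hF α β hlt => hF α β (hlt.trans_le h)

lemma mem_orderGE_zero (F : Coeffs) : F ∈ orderGE 0 := fun _ _ h => absurd h (Nat.not_lt_zero _)

lemma isClosed_zeroMomentum : IsClosed (zeroMomentum : Set Coeffs) := by
  simp only [zeroMomentum, Submodule.coe_set_mk, AddSubmonoid.coe_set_mk,
    AddSubsemigroup.coe_set_mk, Set.ofPred_forall]
  refine isClosed_iInter fun α => isClosed_iInter fun β => isClosed_iInter fun _ =>
    isClosed_eq ?_ continuous_const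
  fun_prop

lemma isClosed_orderGE (n : ℕ) : IsClosed (orderGE n : Set Coeffs) := by
  simp only [orderGE, Submodule.coe_set_mk, AddSubmonoid.coe_set_mk, AddSubsemigroup.coe_set_mk,
    Set.ofPred_forall]
  refine isClosed_iInter fun α => isClosed_iInter fun β => isClosed_iInter fun _ =>
    isClosed_eq ?_ continuous_const
  fun_prop

lemma isClosed_realSeries : IsClosed (realSeries : Set Coeffs) := by
  simp only [realSeries, Submodule.coe_set_mk, AddSubmonoid.coe_set_mk, AddSubsemigroup.coe_set_mk,
    Set.ofPred_forall]
  refine isClosed_iInter fun α => isClosed_iInter fun β =>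
    isClosed_eq (by fun_prop) (Complex.continuous_conj.comp (by fun_prop))

lemma ad_mem_zeroMomentum (F : Coeffs) {f : Coeffs} (hf : f ∈ zeroMomentum) :
    ad F f ∈ zeroMomentum := by
  intro α β hm
  refine ad_apply_eq_zero fun j a b ha hab => ?_
  have hb : momentum (α, β) = momentum b := by simpa [ha] using congrArg momentum hab
  rw [hf b.1 b.2 (ne_of_eq_of_ne hb.symm hm), mul_zero]

lemma ad_mem_orderGE {p q n : ℕ} {F f : Coeffs} (hF : F ∈ orderGE p) (hf : f ∈ orderGE q)
    (hn : n + 2 ≤ p + q) : ad F f ∈ orderGE n := by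
  intro α β hlt
  refine ad_apply_eq_zero fun j a b _ hab => ?_
  have hdeg : degree (α, β) + 2 = degree a + degree b := by simpa using congrArg degree hab
  change degree (α, β) < n at hlt
  obtain ha | hb : degree a < p ∨ degree b < q := by omega
  · rw [hF _ _ ha, zero_mul]
  · rw [hf _ _ hb, mul_zero]

lemma ad_mem_realSeries {F f : Coeffs} (hF : F ∈ realSeries) (hf : f ∈ realSeries) :
    ad F f ∈ realSeries := by
  intro α β
  have swap_mem {α β : Idx} {x : ℤ × (Idx × Idx) × (Idx × Idx)}
      (hx : x ∈ (finite_interactions (α, β)).toFinset) :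
      (x.1, x.2.1.swap, x.2.2.swap) ∈ (finite_interactions (β, α)).toFinset := by
    rw [Set.Finite.mem_toFinset] at hx ⊢
    obtain ⟨hmom, hsum, hsymp⟩ := hx
    exact ⟨by simp [hmom], congrArg Prod.swap hsum, by simpa [symp_swap] using hsymp⟩
  rw [ad_apply, ad_apply, map_mul, map_sum, Complex.conj_I, neg_mul_comm, ← Finset.sum_neg_distrib]
  congr 1
  refine Finset.sum_nbij' (fun x => (x.1, x.2.1.swap, x.2.2.swap))
    (fun x => (x.1, x.2.1.swap, x.2.2.swap)) (fun _ => swap_mem) (fun _ => swap_mem)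
    (fun _ _ => by simp) (fun _ _ => by simp) fun x _ => ?_
  rw [hF x.2.1.1 x.2.1.2, hf x.2.2.1 x.2.2.2]
  simp only [map_mul, symp, Prod.fst_swap, Prod.snd_swap, map_sub, Complex.conj_natCast]
  ring

lemma bracket_eq_ad (F : Coeffs) {G : Coeffs} (hG : G ∈ zeroMomentum) : bracket F G = ad F G := by
  ext α β
  have sub_iff {x : ℤ × (Idx × Idx) × (Idx × Idx)} (h : symp x.1 x.2.1 x.2.2 ≠ 0) :
      (α = x.2.1.1 + x.2.2.1 - Finsupp.single x.1 1 ∧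
        β = x.2.1.2 + x.2.2.2 - Finsupp.single x.1 1) ↔
      (α, β) + actionExp x.1 = x.2.1 + x.2.2 := by
    obtain ⟨h₁, h₂⟩ := actionExp_le_add h
    change α = (x.2.1 + x.2.2).1 - (actionExp x.1).1 ∧
      β = (x.2.1 + x.2.2).2 - (actionExp x.1).2 ↔ _
    rw [eq_tsub_iff_add_eq_of_le h₁, eq_tsub_iff_add_eq_of_le h₂, Prod.ext_iff]
    rfl
  rw [bracket, ad_apply, finsum_eq_sum_of_support_subset]
  · congr 1
    refine Finset.sum_congr rfl fun x hx => ?_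
    obtain ⟨hmom, hsum, hsymp⟩ := (finite_interactions (α, β)).mem_toFinset.1 hx
    by_cases hb : mom x.2.2.1 x.2.2.2 = 0
    · exact if_pos ⟨hmom, hb, (sub_iff hsymp).2 hsum⟩
    · simp [bracketTerm, hb, hG _ _ hb]
  · intro x hx
    simp only [bracketTerm, Function.mem_support, ne_eq, ite_eq_right_iff, Classical.not_imp] at hx
    obtain ⟨⟨hmom, -, hsub⟩, hterm⟩ := hx
    have hsymp : symp x.1 x.2.1 x.2.2 ≠ 0 := right_ne_zero_of_mul hterm
    rw [Set.Finite.coe_toFinset]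
    exact ⟨hmom, (sub_iff hsymp).1 hsub, hsymp⟩

/-! ### Monomials and the Jacobi identity -/

/-- The monomial `u^α ū^β` with exponent pair `a = (α, β)`. -/
def monomial (a : Idx × Idx) : Coeffs := fun α β => if (α, β) = a then 1 else 0

/-- The quotient of the monomials with exponents `s` and `n`, replaced by `0` unless `n ≤ s`. -/
noncomputable def monomialDiv (s n : Idx × Idx) : Coeffs :=
  fun α β => if (α, β) + n = s then 1 else 0

lemma monomialDiv_add_left (n a : Idx × Idx) : monomialDiv (n + a) n = monomial a := by
  ext α β
  simp only [monomialDiv, monomial, add_comm n a, add_left_inj]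

lemma monomialDiv_add_add (s t n : Idx × Idx) : monomialDiv (s + n) (t + n) = monomialDiv s t := by
  ext α β
  simp only [monomialDiv, ← add_assoc, add_left_inj]

lemma monomial_mem_orderGE {a : Idx × Idx} {n : ℕ} (h : n ≤ degree a) :
    monomial a ∈ orderGE n := by
  rintro α β hlt
  refine if_neg ?_
  rintro rfl
  exact (hlt.trans_le h).false

lemma hasSum_monomial (F : Coeffs) : HasSum (fun a => F a.1 a.2 • monomial a) F := by
  refine Pi.hasSum.2 fun α => Pi.hasSum.2 fun β => ?_
  convert hasSum_single (α, β) fun a ha => ?_ using 1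
  · simp [monomial]
  · simp [monomial, ha.symm]

lemma map_eq_map_of_monomial {T U : Coeffs →ₗ[ℂ] Coeffs} (hT : Continuous T) (hU : Continuous U)
    {F : Coeffs} (h : ∀ a : Idx × Idx, F a.1 a.2 ≠ 0 → T (monomial a) = U (monomial a)) :
    T F = U F := by
  refine ((hasSum_monomial F).map T hT).unique ?_
  convert (hasSum_monomial F).map U hU using 1
  ext1 a
  by_cases ha : F a.1 a.2 = 0 <;> simp [ha, h]

lemma momentum_eq_zero_of_coeff_ne_zero {F : Coeffs} (hF : F ∈ zeroMomentum) {a : Idx × Idx}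
    (h : F a.1 a.2 ≠ 0) : momentum a = 0 :=
  of_not_not (mt (hF a.1 a.2) h)

lemma ad_monomial {a b : Idx × Idx} (ha : momentum a = 0) {T : Finset ℤ}
    (hT : ∀ j, symp j a b ≠ 0 → j ∈ T) :
    ad (monomial a) (monomial b) =
      Complex.I • ∑ j ∈ T, symp j a b • monomialDiv (a + b) (actionExp j) := by
  ext α β
  simp only [ad_apply, Pi.smul_apply, Finset.sum_apply, smul_eq_mul]
  congr 1
  have term_ne_zero {x : ℤ × (Idx × Idx) × (Idx × Idx)}
      (hx : monomial a x.2.1.1 x.2.1.2 * monomial b x.2.2.1 x.2.2.2 * symp x.1 x.2.1 x.2.2 ≠ 0) :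
      x = (x.1, a, b) := by
    simp only [monomial] at hx
    grind
  refine Finset.sum_bij_ne_zero (fun x _ _ => x.1) ?_ ?_ ?_ ?_
  · intro x _ hx
    have := right_ne_zero_of_mul hx
    rw [term_ne_zero hx] at this
    exact hT _ this
  · intro x _ hx y _ hy hxy
    rw [term_ne_zero hx, term_ne_zero hy, hxy]
  · intro j _ hne
    simp only [monomialDiv, ne_eq, mul_eq_zero, ite_eq_right_iff, one_ne_zero, imp_false, not_or,
      not_not] at hne
    exact ⟨(j, a, b), by simpa using ⟨ha, hne.2, hne.1⟩, by simpa [monomial] using hne.1, rfl⟩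
  · intro x hx hne
    have hsum := ((finite_interactions (α, β)).mem_toFinset.1 hx).2.1
    rw [term_ne_zero hne] at hsum ⊢
    simp [monomial, monomialDiv, hsum]

lemma ad_antisymm {F G : Coeffs} (hF : F ∈ zeroMomentum) (hG : G ∈ zeroMomentum) :
    ad F G = -ad G F := by
  have on_monomials (a b : Idx × Idx) (ha : momentum a = 0) (hb : momentum b = 0) :
      ad (monomial a) (monomial b) = -ad (monomial b) (monomial a) := by
    rw [ad_monomial ha fun j h => (mem_support_of_symp_ne_zero h).1,
      ad_monomial hb fun j h => (mem_support_of_symp_ne_zero h).2, add_comm b a, ← smul_neg,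
      ← Finset.sum_neg_distrib]
    simp only [symp_antisymm _ b a, neg_smul, neg_neg]
  have on_monomial (b : Idx × Idx) (hb : momentum b = 0) :
      ad F (monomial b) = -ad (monomial b) F :=
    map_eq_map_of_monomial (T := ad.flip (monomial b)) (U := -ad (monomial b))
      (continuous_ad_flip _) (continuous_ad _).neg
      fun a ha => on_monomials a b (momentum_eq_zero_of_coeff_ne_zero hF ha) hb
  exact map_eq_map_of_monomial (T := ad F) (U := -ad.flip F)
    (continuous_ad _) (continuous_ad_flip _).neg
    fun b hb => on_monomial b (momentum_eq_zero_of_coeff_ne_zero hG hb)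

lemma ad_monomial_monomialDiv {a s n : Idx × Idx} (ha : momentum a = 0) (hn : n ≤ s) {T : Finset ℤ}
    (hT : (a.1 + a.2).support ⊆ T) :
    ad (monomial a) (monomialDiv s n) =
      Complex.I • ∑ k ∈ T, (symp k a s - symp k a n) • monomialDiv (a + s) (n + actionExp k) := by
  obtain ⟨y, rfl⟩ := exists_add_of_le hn
  rw [monomialDiv_add_left, ad_monomial ha fun j h => hT (mem_support_of_symp_ne_zero h).1]
  congr! 3 with k
  · rw [symp_add_right, add_sub_cancel_left]
  · rw [add_comm n y, ← add_assoc, add_comm n, monomialDiv_add_add]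

lemma ad_monomialDiv_monomial {d s n : Idx × Idx} (hs : momentum s = momentum n) (hn : n ≤ s)
    {T : Finset ℤ} (hT : (d.1 + d.2).support ⊆ T) :
    ad (monomialDiv s n) (monomial d) =
      Complex.I • ∑ k ∈ T, (symp k d n - symp k d s) • monomialDiv (s + d) (n + actionExp k) := by
  obtain ⟨y, rfl⟩ := exists_add_of_le hn
  rw [monomialDiv_add_left, ad_monomial (by simpa using hs)
    fun j h => hT (mem_support_of_symp_ne_zero h).2]
  congr! 3 with k
  · rw [symp_add_right, symp_antisymm, sub_add_cancel_left]
  · rw [add_comm n y, add_right_comm, add_comm n, monomialDiv_add_add]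

/-- Minus the iterated bracket `{u^a, {u^b, u^d}}` of monomials, with both derivations `∂_{u_j}`,
`∂_{ū_j}` and `∂_{u_k}`, `∂_{ū_k}` ranging over `j, k ∈ T`. -/
noncomputable def nestedBracket (T : Finset ℤ) (a b d : Idx × Idx) : Coeffs :=
  ∑ j ∈ T, ∑ k ∈ T, (symp j b d * (symp k a (b + d) - symp k a (actionExp j))) •
    monomialDiv (a + b + d) (actionExp j + actionExp k)

section Jacobi

variable {a b d : Idx × Idx} {T : Finset ℤ}

lemma ad_monomial_ad_monomial (ha : momentum a = 0) (hb : momentum b = 0)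
    (haT : (a.1 + a.2).support ⊆ T) (hbT : (b.1 + b.2).support ⊆ T) :
    ad (monomial a) (ad (monomial b) (monomial d)) = -nestedBracket T a b d := by
  rw [ad_monomial hb fun j h => hbT (mem_support_of_symp_ne_zero h).1, map_smul, map_sum,
    nestedBracket, ← neg_one_smul ℂ, ← Complex.I_mul_I, mul_smul]
  congr 1
  rw [Finset.smul_sum]
  refine Finset.sum_congr rfl fun j _ => ?_
  by_cases h : symp j b d = 0
  · simp [h]
  · rw [map_smul, ad_monomial_monomialDiv ha (actionExp_le_add h) haT, smul_comm, Finset.smul_sum]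
    simp only [mul_smul, add_assoc]

lemma ad_ad_monomial (ha : momentum a = 0) (hb : momentum b = 0)
    (haT : (a.1 + a.2).support ⊆ T) (hdT : (d.1 + d.2).support ⊆ T) :
    ad (ad (monomial a) (monomial b)) (monomial d) = nestedBracket T d a b := by
  rw [ad_monomial ha fun j h => haT (mem_support_of_symp_ne_zero h).1, map_smul, map_sum,
    LinearMap.smul_apply, LinearMap.sum_apply, Finset.smul_sum, nestedBracket]
  refine Finset.sum_congr rfl fun j _ => ?_
  by_cases h : symp j a b = 0
  · simp [h]
  · rw [map_smul, LinearMap.smul_apply, ad_monomialDiv_monomial (by simp [ha, hb])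
      (actionExp_le_add h) hdT, smul_comm (symp j a b), smul_smul, Complex.I_mul_I,
      Finset.smul_sum, Finset.smul_sum]
    refine Finset.sum_congr rfl fun k _ => ?_
    rw [smul_smul, smul_smul, add_assoc d, add_comm d]
    congr 1
    ring

-- The coefficients of the cyclic sum are antisymmetric in `(j, k)`, the monomials symmetric.
lemma nestedBracket_cyclic (T : Finset ℤ) (a b d : Idx × Idx) :
    nestedBracket T a b d + nestedBracket T b d a + nestedBracket T d a b = 0 := by
  let cyclicCoeff (j k : ℤ) : ℂ :=
    symp j b d * (symp k a (b + d) - symp k a (actionExp j)) +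
      symp j d a * (symp k b (d + a) - symp k b (actionExp j)) +
      symp j a b * (symp k d (a + b) - symp k d (actionExp j))
  have antisymm (j k : ℤ) : cyclicCoeff j k = -cyclicCoeff k j := by
    simp only [cyclicCoeff, symp_add_right, symp_actionExp]
    by_cases hjk : j = k
    · subst hjk
      simp only [if_true, symp]
      ring
    · simp only [if_neg hjk, if_neg (Ne.symm hjk), symp]
      ring
  have cyclic_sum : nestedBracket T a b d + nestedBracket T b d a + nestedBracket T d a b =
      ∑ j ∈ T, ∑ k ∈ T, cyclicCoeff j k •
        monomialDiv (a + b + d) (actionExp j + actionExp k) := by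
    have hbda : b + d + a = a + b + d := by abel
    have hdab : d + a + b = a + b + d := by abel
    simp only [nestedBracket, hbda, hdab, ← Finset.sum_add_distrib, ← add_smul, cyclicCoeff]
  rw [cyclic_sum, ← self_eq_neg]
  nth_rw 1 [Finset.sum_comm]
  rw [← Finset.sum_neg_distrib]
  refine Finset.sum_congr rfl fun k _ => ?_
  rw [← Finset.sum_neg_distrib]
  refine Finset.sum_congr rfl fun j _ => ?_
  rw [antisymm, neg_smul, add_comm (actionExp j)]

lemma ad_ad_monomials (ha : momentum a = 0) (hb : momentum b = 0) :
    ad (monomial a) (ad (monomial b) (monomial d)) =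
      ad (ad (monomial a) (monomial b)) (monomial d) +
        ad (monomial b) (ad (monomial a) (monomial d)) := by
  let T := (a.1 + a.2).support ∪ (b.1 + b.2).support ∪ (d.1 + d.2).support
  have haT : (a.1 + a.2).support ⊆ T := by grind
  have hbT : (b.1 + b.2).support ⊆ T := by grind
  have hdT : (d.1 + d.2).support ⊆ T := by grind
  have swap : nestedBracket T b a d = -nestedBracket T b d a := by
    simp only [nestedBracket, symp_antisymm _ a d, add_comm a d, add_right_comm b a d, neg_mul,
      neg_smul, Finset.sum_neg_distrib]
  rw [ad_ad_monomial ha hb haT hdT, ad_monomial_ad_monomial ha hb haT hbT,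
    ad_monomial_ad_monomial hb ha hbT haT, swap, neg_neg, neg_eq_iff_add_eq_zero,
    ← nestedBracket_cyclic T a b d]
  abel

end Jacobi

lemma ad_ad {F G : Coeffs} (hF : F ∈ zeroMomentum) (hG : G ∈ zeroMomentum) (f : Coeffs) :
    ad F (ad G f) = ad (ad F G) f + ad G (ad F f) := by
  have on_monomials (b d : Idx × Idx) (hb : momentum b = 0) :
      ad F (ad (monomial b) (monomial d)) =
        ad (ad F (monomial b)) (monomial d) + ad (monomial b) (ad F (monomial d)) :=
    map_eq_map_of_monomial (T := ad.flip (ad (monomial b) (monomial d)))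
      (U := ad.flip (monomial d) ∘ₗ ad.flip (monomial b) + ad (monomial b) ∘ₗ ad.flip (monomial d))
      (continuous_ad_flip _)
      (((continuous_ad_flip (monomial d)).comp (continuous_ad_flip (monomial b))).add
        ((continuous_ad (monomial b)).comp (continuous_ad_flip (monomial d))))
      fun a ha => ad_ad_monomials (a := a) (b := b) (d := d)
        (momentum_eq_zero_of_coeff_ne_zero hF ha) hb
  have on_monomial (d : Idx × Idx) :
      ad F (ad G (monomial d)) = ad (ad F G) (monomial d) + ad G (ad F (monomial d)) :=
    map_eq_map_of_monomial (T := ad F ∘ₗ ad.flip (monomial d))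
      (U := ad.flip (monomial d) ∘ₗ ad F + ad.flip (ad F (monomial d)))
      ((continuous_ad F).comp (continuous_ad_flip (monomial d)))
      (((continuous_ad_flip (monomial d)).comp (continuous_ad F)).add
        (continuous_ad_flip (ad F (monomial d))))
      fun b hb => on_monomials b d (momentum_eq_zero_of_coeff_ne_zero hG hb)
  exact map_eq_map_of_monomial (T := ad F ∘ₗ ad G) (U := ad (ad F G) + ad G ∘ₗ ad F)
    ((continuous_ad F).comp (continuous_ad G))
    ((continuous_ad (ad F G)).add ((continuous_ad G).comp (continuous_ad F)))
    fun d _ => on_monomial d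

/-! ### The exponential `e^{{G,·}}` -/

section

variable {ι : Type*} {x : ι → Coeffs}

lemma hasFiniteSupport_coeff (hx : ∀ n, {i | x i ∉ orderGE n}.Finite) (α β : Idx) :
    Function.HasFiniteSupport fun i => x i α β :=
  (hx (wt α + wt β + 1)).subset fun _ hi hmem => hi (hmem α β (Nat.lt_succ_self _))

lemma summable_of_finite_notMem_orderGE (hx : ∀ n, {i | x i ∉ orderGE n}.Finite) : Summable x :=
  Pi.summable.2 fun α => Pi.summable.2 fun β =>
    summable_of_hasFiniteSupport (hasFiniteSupport_coeff hx α β)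

end

/-- The degree `k` term `ad_G^k f / k!` of the exponential series. -/
noncomputable def expTerm (G f : Coeffs) (k : ℕ) : Coeffs :=
  (k.factorial : ℂ)⁻¹ • (ad G ^ k) f

/-- The exponential `e^{{G,·}} f`, summed coefficientwise. In contrast to `expAd` it is not
restricted to series `f` of zero momentum. -/
noncomputable def exp (G f : Coeffs) : Coeffs := ∑' k, expTerm G f k

section Terms

variable {G f : Coeffs}

lemma ad_pow_mem_zeroMomentum (hf : f ∈ zeroMomentum) (k : ℕ) : (ad G ^ k) f ∈ zeroMomentum := by
  induction k with
  | zero => exact hf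
  | succ k ih =>
    rw [pow_succ', Module.End.mul_apply]
    exact ad_mem_zeroMomentum G ih

lemma ad_pow_mem_realSeries (hG : G ∈ realSeries) (hf : f ∈ realSeries) (k : ℕ) :
    (ad G ^ k) f ∈ realSeries := by
  induction k with
  | zero => exact hf
  | succ k ih =>
    rw [pow_succ', Module.End.mul_apply]
    exact ad_mem_realSeries hG ih

lemma ad_pow_mem_orderGE {p q : ℕ} (hG : G ∈ orderGE (p + 2)) (hf : f ∈ orderGE q) (k : ℕ) :
    (ad G ^ k) f ∈ orderGE (k * p + q) := by
  induction k with
  | zero => simpa using hf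
  | succ k ih =>
    rw [pow_succ', Module.End.mul_apply]
    exact ad_mem_orderGE hG ih (by linarith)

lemma expTerm_mem_orderGE {p q : ℕ} (hG : G ∈ orderGE (p + 2)) (hf : f ∈ orderGE q) (k : ℕ) :
    expTerm G f k ∈ orderGE (k * p + q) :=
  Submodule.smul_mem _ _ (ad_pow_mem_orderGE hG hf k)

lemma expTerm_mem_orderGE_self (hG : G ∈ orderGE 3) (f : Coeffs) (k : ℕ) :
    expTerm G f k ∈ orderGE k := by
  simpa using expTerm_mem_orderGE (p := 1) hG (mem_orderGE_zero f) k

lemma finite_expTerm_notMem_orderGE (hG : G ∈ orderGE 3) (f : Coeffs) (n : ℕ) :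
    {k | expTerm G f k ∉ orderGE n}.Finite :=
  (Set.finite_lt_nat n).subset fun k hk => lt_of_not_ge fun hnk =>
    hk (orderGE_anti hnk (expTerm_mem_orderGE_self hG f k))

lemma summable_expTerm (hG : G ∈ orderGE 3) (f : Coeffs) : Summable (expTerm G f) :=
  summable_of_finite_notMem_orderGE (finite_expTerm_notMem_orderGE hG f)

lemma expTerm_smul (c : ℂ) (k : ℕ) : expTerm G (c • f) k = c • expTerm G f k := by
  rw [expTerm, map_smul, smul_comm, expTerm]

lemma exp_smul (G : Coeffs) (c : ℂ) (f : Coeffs) : exp G (c • f) = c • exp G f := by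
  simp only [exp, expTerm_smul, tsum_const_smul'']

lemma exp_mem_zeroMomentum (hf : f ∈ zeroMomentum) : exp G f ∈ zeroMomentum :=
  tsum_mem isClosed_zeroMomentum fun k => Submodule.smul_mem _ _ (ad_pow_mem_zeroMomentum hf k)

lemma exp_mem_realSeries (hG : G ∈ realSeries) (hf : f ∈ realSeries) : exp G f ∈ realSeries := by
  refine tsum_mem isClosed_realSeries fun k => ?_
  have hmem := realSeries.smul_mem (k.factorial : ℝ)⁻¹ (ad_pow_mem_realSeries hG hf k)
  rw [← Complex.coe_smul] at hmem
  simpa [expTerm] using hmem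

lemma exp_sub_sum_mem_orderGE {p q : ℕ} (hp : 1 ≤ p) (hG : G ∈ orderGE (p + 2))
    (hf : f ∈ orderGE q) (m : ℕ) :
    exp G f - ∑ k ∈ Finset.range m, expTerm G f k ∈ orderGE (m * p + q) := by
  have hsum := summable_expTerm (orderGE_anti (by omega) hG) f
  rw [exp, ← hsum.sum_add_tsum_nat_add m, add_sub_cancel_left]
  refine tsum_mem (isClosed_orderGE _) fun k => orderGE_anti ?_ (expTerm_mem_orderGE hG hf (k + m))
  nlinarith

lemma exp_sub_self_mem_orderGE {q : ℕ} (hG : G ∈ orderGE 3) (hf : f ∈ orderGE q) :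
    exp G f - f ∈ orderGE (q + 1) := by
  simpa [expTerm, add_comm] using exp_sub_sum_mem_orderGE le_rfl hG hf 1

end Terms

section CauchyProduct

open Finset.HasAntidiagonal (antidiagonal)

lemma tsum_tsum_eq_tsum_antidiagonal {E : Type*} [AddCommGroup E] [UniformSpace E]
    [IsUniformAddGroup E] [CompleteSpace E] [T2Space E] {a : ℕ → ℕ → E}
    (ha : Summable fun p : ℕ × ℕ => a p.1 p.2) :
    ∑' k, ∑' l, a k l = ∑' n, ∑ p ∈ antidiagonal n, a p.1 p.2 := by
  have hsigma := Finset.HasAntidiagonal.sigmaAntidiagonalEquivProd.summable_iff.2 ha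
  rw [← ha.tsum_prod, ← Finset.HasAntidiagonal.sigmaAntidiagonalEquivProd.tsum_eq]
  refine hsigma.tsum_sigma.trans (tsum_congr fun n => ?_)
  exact Finset.tsum_subtype (antidiagonal n) fun p => a p.1 p.2

lemma summable_prod_of_mem_orderGE {a : ℕ → ℕ → Coeffs}
    (ha : ∀ n k l, n + 2 ≤ k + l → a k l ∈ orderGE n) : Summable fun p : ℕ × ℕ => a p.1 p.2 := by
  refine summable_of_finite_notMem_orderGE fun n => (Set.finite_Iic (n + 2, n + 2)).subset ?_
  intro p hp
  have hlt : p.1 + p.2 < n + 2 := lt_of_not_ge (mt (ha n p.1 p.2) hp)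
  exact ⟨by omega, by omega⟩

lemma inv_factorial_smul_sum_choose {M : Type*} [AddCommGroup M] [Module ℂ M] (n : ℕ)
    (x : ℕ × ℕ → M) :
    (n.factorial : ℂ)⁻¹ • ∑ p ∈ antidiagonal n, n.choose p.1 • x p =
      ∑ p ∈ antidiagonal n, ((p.1.factorial : ℂ)⁻¹ * (p.2.factorial : ℂ)⁻¹) • x p := by
  rw [Finset.smul_sum]
  refine Finset.sum_congr rfl fun p hp => ?_
  obtain rfl := Finset.HasAntidiagonal.mem_antidiagonal.1 hp
  rw [← Nat.cast_smul_eq_nsmul ℂ, smul_smul, Nat.cast_add_choose]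
  have hfact : ((p.1 + p.2).factorial : ℂ) ≠ 0 := Nat.cast_ne_zero.2 (Nat.factorial_ne_zero _)
  congr 1
  field_simp

lemma ad_pow_ad {G F : Coeffs} (hG : G ∈ zeroMomentum) (hF : F ∈ zeroMomentum) (f : Coeffs)
    (n : ℕ) :
    (ad G ^ n) (ad F f) =
      ∑ p ∈ antidiagonal n, n.choose p.1 • ad ((ad G ^ p.1) F) ((ad G ^ p.2) f) := by
  induction n with
  | zero => simp
  | succ n ih =>
    rw [Finset.sum_antidiagonal_choose_succ_nsmul
      (fun k l => ad ((ad G ^ k) F) ((ad G ^ l) f)) n]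
    simp only [pow_succ', Module.End.mul_apply, ih, map_sum, map_nsmul,
      ad_ad hG (ad_pow_mem_zeroMomentum hF _), nsmul_add, Finset.sum_add_distrib]
    rw [add_comm]
    congr 1
    refine Finset.sum_congr rfl fun p hp => ?_
    rw [Nat.choose_symm_of_eq_add (Finset.HasAntidiagonal.mem_antidiagonal.1 hp).symm]

lemma expTerm_ad {G F : Coeffs} (hG : G ∈ zeroMomentum) (hF : F ∈ zeroMomentum) (f : Coeffs)
    (n : ℕ) :
    expTerm G (ad F f) n = ∑ p ∈ antidiagonal n, ad (expTerm G F p.1) (expTerm G f p.2) := by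
  rw [expTerm, ad_pow_ad hG hF, inv_factorial_smul_sum_choose]
  simp only [expTerm, map_smul, LinearMap.smul_apply, smul_smul, mul_comm]

lemma exp_ad {G F : Coeffs} (hG : G ∈ zeroMomentum) (hG₃ : G ∈ orderGE 3)
    (hF : F ∈ zeroMomentum) (f : Coeffs) : exp G (ad F f) = ad (exp G F) (exp G f) := by
  let a (k l : ℕ) : Coeffs := ad (expTerm G F k) (expTerm G f l)
  have ha : Summable fun p : ℕ × ℕ => a p.1 p.2 := summable_prod_of_mem_orderGE fun n k l h =>
    ad_mem_orderGE (expTerm_mem_orderGE_self hG₃ F k) (expTerm_mem_orderGE_self hG₃ f l) h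
  have hf_sum (k : ℕ) : ad (expTerm G F k) (exp G f) = ∑' l, a k l :=
    (summable_expTerm hG₃ f).map_tsum _ (continuous_ad _)
  calc exp G (ad F f) = ∑' n, ∑ p ∈ antidiagonal n, a p.1 p.2 :=
        tsum_congr fun n => expTerm_ad hG hF f n
    _ = ∑' k, ∑' l, a k l := (tsum_tsum_eq_tsum_antidiagonal ha).symm
    _ = ∑' k, ad (expTerm G F k) (exp G f) := tsum_congr fun k => (hf_sum k).symm
    _ = ad (exp G F) (exp G f) := ((summable_expTerm hG₃ F).map_tsum
        (ad.flip (exp G f)) (continuous_ad_flip _)).symm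

lemma continuous_ad_pow (G : Coeffs) (k : ℕ) : Continuous (ad G ^ k) := by
  induction k with
  | zero => exact continuous_id
  | succ k ih =>
    rw [pow_succ']
    exact (continuous_ad G).comp ih

lemma sum_expTerm_neg (G f : Coeffs) (n : ℕ) :
    ∑ p ∈ antidiagonal n, expTerm (-G) (expTerm G f p.2) p.1 = if n = 0 then f else 0 := by
  have hpow : ∑ p ∈ antidiagonal n, n.choose p.1 • (ad (-G) ^ p.1) ((ad G ^ p.2) f) =
      (0 ^ n : Module.End ℂ Coeffs) f := by
    have hcomm : Commute (ad (-G)) (ad G) := by rw [map_neg]; exact (Commute.refl (ad G)).neg_left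
    rw [← neg_add_cancel (ad G), ← map_neg, hcomm.add_pow', LinearMap.sum_apply]
    rfl
  have hterm (p : ℕ × ℕ) : expTerm (-G) (expTerm G f p.2) p.1 =
      ((p.1.factorial : ℂ)⁻¹ * (p.2.factorial : ℂ)⁻¹) • (ad (-G) ^ p.1) ((ad G ^ p.2) f) := by
    simp only [expTerm, map_smul, smul_smul]
  rw [Finset.sum_congr rfl fun p _ => hterm p, ← inv_factorial_smul_sum_choose n
    (fun p => (ad (-G) ^ p.1) ((ad G ^ p.2) f)), hpow]
  rcases n with _ | n <;> simp

lemma exp_neg_exp {G : Coeffs} (hG : G ∈ orderGE 3) (f : Coeffs) : exp (-G) (exp G f) = f := by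
  let a (k l : ℕ) : Coeffs := expTerm (-G) (expTerm G f l) k
  have ha : Summable fun p : ℕ × ℕ => a p.1 p.2 := summable_prod_of_mem_orderGE fun n k l h =>
    orderGE_anti (by omega)
      (expTerm_mem_orderGE (p := 1) (neg_mem hG) (expTerm_mem_orderGE_self hG f l) k)
  have hexp (k : ℕ) : expTerm (-G) (exp G f) k = ∑' l, a k l := by
    rw [expTerm, exp, (summable_expTerm hG f).map_tsum _ (continuous_ad_pow (-G) k),
      ← tsum_const_smul'']
    rfl
  calc exp (-G) (exp G f) = ∑' k, ∑' l, a k l := tsum_congr hexp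
    _ = ∑' n, ∑ p ∈ antidiagonal n, a p.1 p.2 := tsum_tsum_eq_tsum_antidiagonal ha
    _ = ∑' n, if n = 0 then f else 0 := tsum_congr (sum_expTerm_neg G f)
    _ = f := tsum_ite_eq 0 _

end CauchyProduct

lemma expAd_eq_exp {G H : Coeffs} (hG : G ∈ orderGE 3) (hH : H ∈ zeroMomentum) :
    expAd G H = exp G H := by
  have adPow_eq (k : ℕ) : adPow G k H = (ad G ^ k) H := by
    induction k with
    | zero => rfl
    | succ k ih =>
      rw [adPow, ih, bracket_eq_ad G (ad_pow_mem_zeroMomentum hH k), pow_succ']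
      rfl
  have hsum := summable_expTerm hG H
  ext α β
  rw [exp, tsum_apply hsum, tsum_apply (Pi.summable.1 hsum α),
    tsum_eq_finsum (hasFiniteSupport_coeff (finite_expTerm_notMem_orderGE hG H) α β)]
  simp only [expAd, adPow_eq, expTerm, Pi.smul_apply, smul_eq_mul]

/-! ### The quadratic Hamiltonian `D_ω` -/

lemma Dom_actionExp (ω : ℤ → ℝ) (j : ℤ) :
    Dom ω (actionExp j).1 (actionExp j).2 = ω j := by
  rw [Dom, finsum_eq_single _ j fun k hk => if_neg fun h =>
    hk.symm (Finsupp.single_left_injective one_ne_zero h.1)]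
  exact if_pos ⟨rfl, rfl⟩

lemma Dom_eq_zero (ω : ℤ → ℝ) {a : Idx × Idx} (ha : a ∉ Set.range actionExp) :
    Dom ω a.1 a.2 = 0 :=
  finsum_eq_zero_of_forall_eq_zero fun j => if_neg fun h => ha ⟨j, Prod.ext h.1.symm h.2.symm⟩

lemma hasSum_Dom (ω : ℤ → ℝ) : HasSum (fun j => (ω j : ℂ) • monomial (actionExp j)) (Dom ω) := by
  have hsum := (actionExp_injective.hasSum_iff fun a ha => by rw [Dom_eq_zero ω ha, zero_smul]).2
    (hasSum_monomial (Dom ω))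
  simpa only [Function.comp_def, Dom_actionExp] using hsum

lemma Dom_apply_of_ne (ω : ℤ → ℝ) {α β : Idx} (h : α ≠ β) : Dom ω α β = 0 :=
  Dom_eq_zero ω (a := (α, β)) fun ⟨_, hj⟩ => h (hj ▸ rfl : (α, β).1 = (α, β).2)

lemma Dom_mem_orderGE (ω : ℤ → ℝ) : Dom ω ∈ orderGE 2 := fun α β hlt =>
  Dom_eq_zero ω (a := (α, β)) fun ⟨j, hj⟩ =>
    hlt.ne ((congrArg degree hj).symm.trans (degree_actionExp j))

lemma Dom_mem_zeroMomentum (ω : ℤ → ℝ) : Dom ω ∈ zeroMomentum := fun α _ hm =>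
  Dom_apply_of_ne ω fun h => hm (h ▸ momentum_diag α)

lemma Dom_mem_realSeries (ω : ℤ → ℝ) : Dom ω ∈ realSeries := by
  intro α β
  rcases eq_or_ne α β with rfl | h
  · by_cases hrange : (α, α) ∈ Set.range actionExp
    · obtain ⟨j, hj⟩ := hrange
      have hcoeff := Dom_actionExp ω j
      rw [hj] at hcoeff
      rw [hcoeff, Complex.conj_ofReal]
    · rw [Dom_eq_zero ω hrange, map_zero]
  · rw [Dom_apply_of_ne ω h, Dom_apply_of_ne ω h.symm, map_zero]

/-- The divisor `ω · (β - α)` of the exponent pair `(α, β)` in the homological equation. -/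
noncomputable def frequency (ω : ℤ → ℝ) (a : Idx × Idx) : ℝ :=
  (a.2.mapRange ((↑) : ℕ → ℤ) rfl - a.1.mapRange ((↑) : ℕ → ℤ) rfl).sum fun j c => ω j * (c : ℝ)

lemma frequency_ne_zero {ω : ℤ → ℝ} (hω : NonResonant ω) {α β : Idx} (h : α ≠ β) :
    frequency ω (α, β) ≠ 0 := by
  refine hω _ (sub_ne_zero.2 fun heq => h ?_)
  exact (Finsupp.mapRange_injective _ rfl Nat.cast_injective heq).symm

lemma frequency_self_add_single (ω : ℤ → ℝ) (α : Idx) (j : ℤ) :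
    frequency ω (α, α + Finsupp.single j 1) = ω j := by
  simp [frequency, Finsupp.mapRange_add]

lemma hasSum_frequency (ω : ℤ → ℝ) (a : Idx × Idx) :
    HasSum (fun j => ω j * ((a.2 j : ℝ) - a.1 j)) (frequency ω a) := by
  have hterm (j : ℤ) : ω j * ((a.2 j : ℝ) - a.1 j) = ω j *
      ((a.2.mapRange ((↑) : ℕ → ℤ) rfl - a.1.mapRange ((↑) : ℕ → ℤ) rfl) j : ℤ) := by
    simp
  simp only [hterm]
  refine hasSum_sum_of_ne_finset_zero fun j hj => ?_
  rw [Finsupp.notMem_support_iff.1 hj, Int.cast_zero, mul_zero]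

lemma ad_monomial_actionExp (j : ℤ) (a : Idx × Idx) :
    ad (monomial (actionExp j)) (monomial a) =
      (Complex.I * ((a.2 j : ℂ) - a.1 j)) • monomial a := by
  have single_mem (k : ℤ) (hk : symp k (actionExp j) a ≠ 0) : k ∈ ({j} : Finset ℤ) := by
    rw [symp_antisymm, symp_actionExp] at hk
    grind
  rw [ad_monomial (momentum_actionExp j) single_mem, Finset.sum_singleton, symp_antisymm,
    symp_actionExp, if_pos rfl, monomialDiv_add_left, neg_sub, mul_smul]

lemma ad_Dom_monomial (ω : ℤ → ℝ) (a : Idx × Idx) :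
    ad (Dom ω) (monomial a) = (Complex.I * frequency ω a) • monomial a := by
  refine ((hasSum_Dom ω).map (ad.flip (monomial a)) (continuous_ad_flip _)).unique ?_
  convert ((Complex.hasSum_ofReal.2 (hasSum_frequency ω a)).mul_left Complex.I).smul_const
    (monomial a) using 2 with j
  simp only [Function.comp_apply, map_smul, LinearMap.flip_apply, ad_monomial_actionExp, smul_smul]
  push_cast
  ring_nf

lemma ad_Dom_apply (ω : ℤ → ℝ) (f : Coeffs) (α β : Idx) :
    ad (Dom ω) f α β = Complex.I * frequency ω (α, β) * f α β := by
  have hdiag : ad (Dom ω) f = fun α β => Complex.I * frequency ω (α, β) * f α β := by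
    refine ((hasSum_monomial f).map (ad (Dom ω)) (continuous_ad _)).unique ?_
    convert hasSum_monomial fun α β => Complex.I * frequency ω (α, β) * f α β using 2 with a
    rw [Function.comp_apply, map_smul, ad_Dom_monomial, smul_smul, mul_comm]
  exact congrFun₂ hdiag α β

/-! ### Eigenvariables -/

/-- `H` has eigenvariables with frequencies `ω`: for every `j` there is a formal series tangent to
`ū_j` which is an eigenvector of `{H, ·}` with the same eigenvalue `i ω_j` as `ū_j` for
`{D_ω, ·}`. -/
def HasEigenvariables (ω : ℤ → ℝ) (H : Coeffs) : Prop :=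
  ∀ j, ∃ f : Coeffs, f - monomial (uBarExp j) ∈ orderGE 2 ∧ ad H f = (Complex.I * ω j) • f

lemma hasEigenvariables_Dom (ω : ℤ → ℝ) : HasEigenvariables ω (Dom ω) := fun j => by
  refine ⟨monomial (uBarExp j), by simp, ?_⟩
  rw [ad_Dom_monomial]
  simpa [uBarExp] using congrArg
    (fun x : ℝ => (Complex.I * x) • monomial (uBarExp j)) (frequency_self_add_single ω 0 j)

lemma mem_orderGE_one_of_sub_uBar {f : Coeffs} {j : ℤ} (hf : f - monomial (uBarExp j) ∈ orderGE 2) :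
    f ∈ orderGE 1 := by
  have hmem := add_mem (orderGE_anti one_le_two hf)
    (monomial_mem_orderGE (degree_uBarExp j).ge)
  rwa [sub_add_cancel] at hmem

lemma HasEigenvariables.exp {ω : ℤ → ℝ} {G H : Coeffs} (hH : HasEigenvariables ω H)
    (hH₀ : H ∈ zeroMomentum) (hG : G ∈ zeroMomentum) (hG₃ : G ∈ orderGE 3) :
    HasEigenvariables ω (exp G H) := fun j => by
  obtain ⟨f, hf, heigen⟩ := hH j
  refine ⟨Coeffs.exp G f, ?_, by rw [← exp_ad hG hG₃ hH₀, heigen, exp_smul]⟩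
  have hmem := add_mem (exp_sub_self_mem_orderGE hG₃ (mem_orderGE_one_of_sub_uBar hf)) hf
  rwa [sub_add_sub_cancel] at hmem

lemma ad_uBar_apply {Z : Coeffs} (hZ : Z ∈ zeroMomentum) (j : ℤ) (α β : Idx) :
    ad Z (monomial (uBarExp j)) α β =
      Complex.I * ((α j + 1) * Z (α + Finsupp.single j 1) β) := by
  have term_eq (a : Idx × Idx) : (Z a.1 a.2 • ad (monomial a) (monomial (uBarExp j))) α β =
      Z a.1 a.2 * (Complex.I * (a.1 j * if (α, β) + uExp j = a then 1 else 0)) := by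
    by_cases ha : Z a.1 a.2 = 0
    · simp [ha]
    have single_mem (k : ℤ) (hk : symp k a (uBarExp j) ≠ 0) : k ∈ ({j} : Finset ℤ) := by
      have := mem_support_of_symp_ne_zero hk
      simp only [uBarExp] at this
      grind
    rw [ad_monomial (momentum_eq_zero_of_coeff_ne_zero hZ ha) single_mem, Finset.sum_singleton,
      ← uExp_add_uBarExp, monomialDiv_add_add]
    simp [symp, uBarExp, monomialDiv]
  have hsum := (hasSum_monomial Z).map (ad.flip (monomial (uBarExp j))) (continuous_ad_flip _)
  refine (Pi.hasSum.1 (Pi.hasSum.1 hsum α) β).unique ?_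
  simp only [Function.comp_apply, map_smul, LinearMap.flip_apply, term_eq]
  convert hasSum_single ((α, β) + uExp j) fun a ha => ?_ using 1
  · simp [uExp]
    ring
  · simp [ha.symm]

section NormalForm

variable {ω : ℤ → ℝ} {Z W : Coeffs}

-- In the eigenvector equation at `(E, E + e_j)`, `D_ω` and the eigenvalue cancel.
lemma eigenvariable_diagonal_coeff (hZ : Z ∈ zeroMomentum) {f : Coeffs} {j : ℤ}
    (heigen : ad (Dom ω + Z + W) f = (Complex.I * ω j) • f) (E : Idx) :
    Complex.I * ((E j + 1) * Z (E + Finsupp.single j 1) (E + Finsupp.single j 1)) +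
      (ad Z (f - monomial (uBarExp j)) + ad W f) E (E + Finsupp.single j 1) = 0 := by
  have hsplit : ad (Dom ω + Z + W) f = ad (Dom ω) f + ad Z (monomial (uBarExp j)) +
      (ad Z (f - monomial (uBarExp j)) + ad W f) := by
    simp only [map_add, map_sub, LinearMap.add_apply]
    abel
  have hcoeff := congrFun₂ (hsplit.symm.trans heigen) E (E + Finsupp.single j 1)
  rw [Pi.add_apply, Pi.add_apply, Pi.add_apply, Pi.add_apply, Pi.smul_apply, Pi.smul_apply,
    smul_eq_mul, ad_Dom_apply, frequency_self_add_single, ad_uBar_apply hZ] at hcoeff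
  linear_combination hcoeff

lemma diagonal_mem_orderGE_succ {r : ℕ} (hr : 1 ≤ r) (hdiag : ∀ α β, α ≠ β → Z α β = 0)
    (hZ : Z ∈ orderGE r) (hW : W ∈ orderGE (r + 1))
    (heigen : HasEigenvariables ω (Dom ω + Z + W)) : Z ∈ orderGE (r + 1) := by
  have hZ₀ : Z ∈ zeroMomentum := fun α β hm => hdiag α β fun h => hm (h ▸ momentum_diag α)
  intro α β hlt
  rcases eq_or_ne α β with rfl | hne
  swap
  · exact hdiag α β hne
  rcases eq_or_ne α 0 with rfl | hα
  · exact hZ 0 0 (by rw [wt, Finsupp.sum_zero_index]; omega)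
  obtain ⟨j, hj⟩ := Finsupp.ne_iff.1 hα
  obtain ⟨E, rfl⟩ : ∃ E, α = E + Finsupp.single j 1 :=
    ⟨α - Finsupp.single j 1,
      (tsub_add_cancel_of_le (by simpa [Nat.one_le_iff_ne_zero] using hj)).symm⟩
  obtain ⟨f, hf, hHf⟩ := heigen j
  have hdegree : degree (E, E + Finsupp.single j 1) < r := by
    have hadd : (E, E + Finsupp.single j 1) + uExp j =
        (E + Finsupp.single j 1, E + Finsupp.single j 1) := by simp [uExp]
    have hdegree_add := congrArg degree hadd
    rw [map_add, degree_uExp] at hdegree_add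
    exact Nat.succ_lt_succ_iff.1 (hdegree_add.trans_lt hlt)
  have hrest : ad Z (f - monomial (uBarExp j)) + ad W f ∈ orderGE r :=
    add_mem (ad_mem_orderGE hZ hf le_rfl)
      (ad_mem_orderGE hW (mem_orderGE_one_of_sub_uBar hf) le_rfl)
  have hcoeff := eigenvariable_diagonal_coeff hZ₀ hHf E
  rw [hrest _ _ hdegree, add_zero] at hcoeff
  simpa [Nat.cast_add_one_ne_zero] using hcoeff

lemma diagonal_mem_orderGE {n : ℕ} (hdiag : ∀ α β, α ≠ β → Z α β = 0) (hZ : Z ∈ orderGE 1)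
    (hW : W ∈ orderGE n) (heigen : HasEigenvariables ω (Dom ω + Z + W)) : Z ∈ orderGE n := by
  have up_to (r : ℕ) (hr : 1 ≤ r) : r ≤ n → Z ∈ orderGE r := by
    induction r, hr using Nat.le_induction with
    | base => exact fun _ => hZ
    | succ r hr ih => exact fun hrn =>
        diagonal_mem_orderGE_succ hr hdiag (ih (by omega)) (orderGE_anti hrn hW) heigen
  rcases n.eq_zero_or_pos with rfl | hn
  · exact mem_orderGE_zero Z
  · exact up_to n hn le_rfl

end NormalForm

/-! ### One step of the scheme -/

lemma inFge_iff {d : ℕ} {K : Coeffs} :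
    InFge d K ↔ K ∈ realSeries ∧ K ∈ zeroMomentum ∧ K ∈ orderGE (d + 2) := by
  refine ⟨fun h => ⟨h.1.2.2.2.1, h.1.2.2.2.2, h.2⟩, fun ⟨hreal, hmom, hord⟩ =>
    ⟨⟨?_, ?_, ?_, hreal, hmom⟩, hord⟩⟩ <;> exact hord _ _ (by simp [wt])

section Step

variable {ω : ℤ → ℝ} {d : ℕ} {H S : Coeffs}

lemma homological_mem_orderGE (hω : NonResonant ω) (hord : H - Dom ω ∈ orderGE (d + 2))
    (hdiag : ∀ α, S α α = 0) (hS : ad (Dom ω) S = PiR H) : S ∈ orderGE (d + 2) := by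
  intro α β hlt
  rcases eq_or_ne α β with rfl | hne
  · exact hdiag α
  have hH : H α β = 0 := by simpa [Dom_apply_of_ne ω hne] using hord α β hlt
  have hcoeff := congrFun₂ hS α β
  rw [ad_Dom_apply, PiR, if_neg hne, hH] at hcoeff
  simpa [frequency_ne_zero hω hne] using hcoeff

lemma exp_sub_normalForm_mem_orderGE (hd : 1 ≤ d) (hord : H - Dom ω ∈ orderGE (d + 2))
    (hS₀ : S ∈ zeroMomentum) (hSd : S ∈ orderGE (d + 2)) (hS : ad (Dom ω) S = PiR H) :
    exp S H - Dom ω - PiK (H - Dom ω) ∈ orderGE (2 * d + 2) := by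
  have hH : H ∈ orderGE 2 := by
    have := add_mem (orderGE_anti (by omega) hord) (Dom_mem_orderGE ω)
    rwa [sub_add_cancel] at this
  have hremainder := exp_sub_sum_mem_orderGE hd hSd hH 2
  have hquadratic := ad_mem_orderGE hSd hord (n := 2 * d + 2) (by omega)
  have hsplit : H - Dom ω = PiK (H - Dom ω) + PiR H := by
    ext α β
    rcases eq_or_ne α β with rfl | hne
    · simp [PiK, PiR]
    · simp [PiK, PiR, hne, Dom_apply_of_ne ω hne]
  have hhom : ad S (Dom ω) = -PiR H := by
    rw [ad_antisymm hS₀ (Dom_mem_zeroMomentum ω), hS]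
  have htwo : ∑ k ∈ Finset.range 2, expTerm S H k = H + ad S H := by
    simp [Finset.sum_range_succ, expTerm]
  have heq : exp S H - Dom ω - PiK (H - Dom ω) =
      (exp S H - ∑ k ∈ Finset.range 2, expTerm S H k) + ad S (H - Dom ω) := by
    rw [htwo, map_sub, hhom]
    linear_combination hsplit
  rw [heq]
  exact add_mem hremainder hquadratic

lemma exp_sub_Dom_mem_orderGE (hd : 1 ≤ d) (hord : H - Dom ω ∈ orderGE (d + 2))
    (heigen : HasEigenvariables ω (exp S H)) (hS₀ : S ∈ zeroMomentum)
    (hSd : S ∈ orderGE (d + 2)) (hS : ad (Dom ω) S = PiR H) :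
    exp S H - Dom ω ∈ orderGE (2 * d + 2) := by
  have hquadratic := exp_sub_normalForm_mem_orderGE hd hord hS₀ hSd hS
  have hdiag (α β : Idx) (h : α ≠ β) : PiK (H - Dom ω) α β = 0 := if_neg h
  have hZ : PiK (H - Dom ω) ∈ orderGE 1 := fun α β hlt => by
    simp [PiK, hord α β (by omega)]
  have hnormalForm := diagonal_mem_orderGE hdiag hZ hquadratic (by convert heigen using 1; abel)
  simpa using add_mem hquadratic hnormalForm

lemma expAd_doubling (hω : NonResonant ω) (hd : 1 ≤ d) (hH : InFge d (H - Dom ω))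
    (heigen : HasEigenvariables ω H) (hSR : InR S) (hS : bracket (Dom ω) S = PiR H) :
    InFge (2 * d) (expAd S H - Dom ω) ∧ HasEigenvariables ω (expAd S H) := by
  obtain ⟨⟨-, -, -, hSreal, hS₀⟩, hSdiag⟩ := hSR
  obtain ⟨hreal, hmom, hord⟩ := inFge_iff.1 hH
  rw [bracket_eq_ad _ hS₀] at hS
  have hSd : S ∈ orderGE (d + 2) := homological_mem_orderGE hω hord hSdiag hS
  have hS₃ : S ∈ orderGE 3 := orderGE_anti (by omega) hSd
  have hH₀ : H ∈ zeroMomentum := by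
    simpa using add_mem hmom (Dom_mem_zeroMomentum ω)
  have hHreal : H ∈ realSeries := by
    simpa using add_mem hreal (Dom_mem_realSeries ω)
  rw [expAd_eq_exp hS₃ hH₀]
  have heigen_exp := heigen.exp hH₀ hS₀ hS₃
  exact ⟨inFge_iff.2 ⟨sub_mem (exp_mem_realSeries hSreal hHreal) (Dom_mem_realSeries ω),
    sub_mem (exp_mem_zeroMomentum hH₀) (Dom_mem_zeroMomentum ω),
    exp_sub_Dom_mem_orderGE hd hord heigen_exp hS₀ hSd hS⟩, heigen_exp⟩

end Step

lemma hasEigenvariables_of_linearizable {ω : ℤ → ℝ} {G H : Coeffs} (hG : InFge 1 G)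
    (hH : H ∈ zeroMomentum) (hlin : expAd G H = Dom ω) : HasEigenvariables ω H := by
  obtain ⟨-, hG₀, hG₃⟩ := inFge_iff.1 hG
  rw [expAd_eq_exp hG₃ hH] at hlin
  rw [← exp_neg_exp hG₃ H, hlin]
  exact (hasEigenvariables_Dom ω).exp (Dom_mem_zeroMomentum ω) (neg_mem hG₀) (neg_mem hG₃)

end Coeffs

/-- quadratic convergence of the linearizing scheme: if
`H₀ = D_ω + P₀` with `P₀ ∈ 𝓕^{≥1}` is formally linearizable and the sequence
is defined by `{D_ω, S_i} = Π^𝓡 H_i` with `S_i ∈ 𝓡` and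
`H_{i+1} = e^{{S_i,·}} H_i`, then `H_i = D_ω + P_i` with `P_i ∈ 𝓕^{≥2^i}`. -/
theorem formal_linearization_doubling (ω : ℤ → ℝ) (hω : NonResonant ω)
    (P₀ : Coeffs) (hP₀ : InFge 1 P₀)
    (hlin : ∃ G : Coeffs, InFge 1 G ∧ expAd G (Dom ω + P₀) = Dom ω)
    (H S : ℕ → Coeffs) (hH0 : H 0 = Dom ω + P₀)
    (hS : ∀ i, InR (S i) ∧ bracket (Dom ω) (S i) = PiR (H i))
    (hHrec : ∀ i, H (i + 1) = expAd (S i) (H i)) :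
    ∀ i, InFge (2 ^ i) (H i - Dom ω) := by
  have hH₀ : Dom ω + P₀ ∈ Coeffs.zeroMomentum :=
    add_mem (Coeffs.Dom_mem_zeroMomentum ω) (Coeffs.inFge_iff.1 hP₀).2.1
  have heigen : Coeffs.HasEigenvariables ω (Dom ω + P₀) :=
    let ⟨_, hG, hGlin⟩ := hlin
    Coeffs.hasEigenvariables_of_linearizable hG hH₀ hGlin
  have hstep (i : ℕ) : InFge (2 ^ i) (H i - Dom ω) ∧ Coeffs.HasEigenvariables ω (H i) := by
    induction i with
    | zero => simpa [hH0] using ⟨hP₀, heigen⟩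
    | succ i ih =>
      rw [hHrec, pow_succ']
      exact Coeffs.expAd_doubling hω Nat.one_le_two_pow ih.1 ih.2 (hS i).1 (hS i).2
  exact fun i => (hstep i).1
end

section
/- Fix 0 < θ < 1 and set C_* := 7/(2 − 2^θ). Let α, β ∈ ℕ^ℤ_f with ∑_i i(α_i − β_i) = 0, α ≠ β, and |α| + |β| ≥ 3, and assume |∑_{i∈ℤ} (α_i − β_i) i²| ≤ 2 ∑_{i∈ℤ} |α_i − β_i|. Then for every j ∈ ℤ with α_j + β_j ≠ 0 one has ∑_{i∈ℤ} |α_i − β_i| ⟨i⟩^{θ/2} ≤ C_* ( ∑_{i∈ℤ} (α_i + β_i) ⟨i⟩^θ − 2⟨j⟩^θ ). -/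
open scoped BigOperators ENNReal

/-- `⟨j⟩ = max(|j|,1)` as a real number. -/
def zbr (j : ℤ) : ℝ := ((max j.natAbs 1 : ℕ) : ℝ)

/-!
Regard `(α, β)` as a multiset of signed integers, and let `p`, `q` be the two of largest absolute
value, `|q| ≤ |p|`, and `t` the rest. Momentum conservation gives `⟨p⟩ ≤ ⟨q⟩ + ∑_t ⟨u⟩`, which
concavity of `x ↦ x ^ θ` sharpens to `⟨p⟩^θ ≤ ⟨q⟩^θ + (2^θ - 1) ∑_t ⟨u⟩^θ`; hence the bracket on the
right-hand side of the claim is at least `(2 - 2^θ) ∑_t ⟨u⟩^θ`. It remains to bound the left-hand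
side by `7 ∑_t ⟨u⟩^θ`. If `p` and `q` cancel, only `t` contributes. Otherwise `|p|` is controlled by
`|σp + τq| + |σp² + τq²|` for their signs `σ`, `τ`, and both summands are controlled by the rest:
the first by momentum conservation, the second by the quadratic hypothesis. This yields
`⟨p⟩ ≤ 8 ∑_t ⟨u⟩²`, so `⟨p⟩^(θ/2)` and `⟨q⟩^(θ/2)` are at most `3 ∑_t ⟨u⟩^θ`, since
`8^(θ/2) ≤ 3`.
-/

section Concavity

lemma concaveOn_add_le_add {𝕜 : Type*} [Field 𝕜] [LinearOrder 𝕜] [IsStrictOrderedRing 𝕜]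
    {s : Set 𝕜} {f : 𝕜 → 𝕜} (hf : ConcaveOn 𝕜 s f) {a b h : 𝕜}
    (ha : a ∈ s) (hbh : b + h ∈ s) (hab : a ≤ b) (hh : 0 ≤ h) :
    f a + f (b + h) ≤ f b + f (a + h) := by
  rcases hh.eq_or_lt with rfl | hpos
  · simp [add_comm]
  -- `b` and `a + h` are convex combinations of `a` and `b + h` with interchanged weights.
  have hd : 0 < b + h - a := by linarith
  have hw : 0 ≤ h / (b + h - a) := by positivity
  have hv : 0 ≤ (b - a) / (b + h - a) := div_nonneg (by linarith) hd.le
  have hb := hf.2 ha hbh hw hv (by field_simp; ring)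
  have hah := hf.2 ha hbh hv hw (by field_simp; ring)
  have eb : (h / (b + h - a)) • a + ((b - a) / (b + h - a)) • (b + h) = b := by
    simp only [smul_eq_mul]; field_simp; ring
  have eah : ((b - a) / (b + h - a)) • a + (h / (b + h - a)) • (b + h) = a + h := by
    simp only [smul_eq_mul]; field_simp; ring
  have hsum : h / (b + h - a) + (b - a) / (b + h - a) = 1 := by field_simp; ring
  rw [eb] at hb
  rw [eah] at hah
  simp only [smul_eq_mul] at hb hah
  linear_combination hb + hah + (-f a - f (b + h)) * hsum

variable {θ : ℝ}

lemma add_rpow_le_rpow_add_mul_rpow (h0 : 0 ≤ θ) (h1 : θ ≤ 1) {x y : ℝ} (hx : 0 ≤ x)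
    (hxy : x ≤ y) : (y + x) ^ θ ≤ y ^ θ + (2 ^ θ - 1) * x ^ θ := by
  have hconc := concaveOn_add_le_add (Real.concaveOn_rpow h0 h1) (Set.mem_Ici.2 hx)
    (Set.mem_Ici.2 (add_nonneg (hx.trans hxy) hx)) hxy hx
  rw [← two_mul, Real.mul_rpow zero_le_two hx] at hconc
  linarith

lemma add_sum_rpow_le (h0 : 0 ≤ θ) (h1 : θ ≤ 1) {y : ℝ} {t : Multiset ℝ}
    (ht : ∀ x ∈ t, 0 ≤ x ∧ x ≤ y) :
    (y + t.sum) ^ θ ≤ y ^ θ + (2 ^ θ - 1) * (t.map (· ^ θ)).sum := by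
  induction t using Multiset.induction_on with
  | empty => simp
  | cons x t ih =>
    rw [Multiset.forall_mem_cons] at ht
    have hsum : 0 ≤ t.sum := Multiset.sum_nonneg fun z hz => (ht.2 z hz).1
    have hstep := add_rpow_le_rpow_add_mul_rpow h0 h1 ht.1.1 (y := y + t.sum) (by linarith)
    rw [Multiset.map_cons, Multiset.sum_cons, Multiset.sum_cons, add_left_comm, add_comm x]
    linarith [ih ht.2]

lemma sum_rpow_le_sum_map_rpow (h0 : 0 < θ) (h1 : θ ≤ 1) {t : Multiset ℝ}
    (ht : ∀ x ∈ t, 0 ≤ x) : t.sum ^ θ ≤ (t.map (· ^ θ)).sum :=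
  Multiset.le_sum_of_subadditive_on_pred (· ^ θ) (0 ≤ ·) (Real.zero_rpow h0.ne').le le_rfl
    (fun _ _ hx hy => Real.rpow_add_le_add_rpow hx hy h0.le h1)
    (fun _ _ hx hy => add_nonneg hx hy) t ht

end Concavity

lemma exists_two_largest {ι R : Type*} [LinearOrder R] (f : ι → R) {M : Multiset ι}
    (hM : 2 ≤ M.card) : ∃ x y t, M = x ::ₘ y ::ₘ t ∧ f y ≤ f x ∧ ∀ u ∈ t, f u ≤ f y := by
  obtain ⟨x, hx, hxmax⟩ := Multiset.exists_max_image f (s := M) (by rintro rfl; simp at hM)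
  obtain ⟨N, rfl⟩ := Multiset.exists_cons_of_mem hx
  obtain ⟨y, hy, hymax⟩ := Multiset.exists_max_image f (s := N) (by rintro rfl; simp at hM)
  obtain ⟨t, rfl⟩ := Multiset.exists_cons_of_mem hy
  exact ⟨x, y, t, rfl, hxmax y (by simp), fun u hu => hymax u (by simp [hu])⟩

lemma sum_map_toMultiset {ι A : Type*} [AddCommMonoid A] (γ : ι →₀ ℕ) (g : ι → A) :
    ((Finsupp.toMultiset γ).map g).sum = Finsupp.weight g γ := by
  induction γ using Finsupp.induction_linear with
  | zero => simp
  | add γ δ hγ hδ => simp [hγ, hδ]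
  | single i n => simp [Finsupp.weight_single, Multiset.map_nsmul, Multiset.sum_nsmul]

lemma weight_eq_finsum {ι A : Type*} [AddCommMonoid A] (γ : ι →₀ ℕ) (g : ι → A) :
    Finsupp.weight g γ = ∑ᶠ i, γ i • g i := by
  rw [Finsupp.weight_apply, Finsupp.sum, finsum_eq_sum_of_support_subset]
  exact (Function.support_smul_subset_left γ g).trans_eq (Finsupp.fun_support_eq γ)

lemma abs_le_abs_signed_add_abs_signed_sq {x y : ℤ × ℤˣ} (hxy : x ≠ (y.1, -y.2)) :
    |x.1| ≤ |x.2 * x.1 + y.2 * y.1| + |x.2 * x.1 ^ 2 + y.2 * y.1 ^ 2| := by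
  obtain ⟨p, σ⟩ := x
  obtain ⟨q, τ⟩ := y
  have hsame : |p| ≤ |p ^ 2 + q ^ 2| := by
    rw [abs_of_nonneg (a := p ^ 2 + q ^ 2) (by positivity), ← sq_abs]
    nlinarith [Int.le_self_sq |p|]
  have hopp (hpq : p ≠ q) : |p| ≤ |p - q| + |p ^ 2 - q ^ 2| := by
    have hdiff : |p + q| ≤ |p ^ 2 - q ^ 2| := by
      rw [sq_sub_sq, abs_mul]
      exact le_mul_of_one_le_right (abs_nonneg _) (Int.one_le_abs (sub_ne_zero.2 hpq))
    have htwice : |2 * p| ≤ |p - q| + |p + q| := by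
      simpa [two_mul] using abs_add_le (p - q) (p + q)
    rw [abs_mul, abs_two] at htwice
    linarith [abs_nonneg p]
  rcases Int.units_eq_one_or σ with rfl | rfl <;> rcases Int.units_eq_one_or τ with rfl | rfl
  · simpa using hsame.trans (le_add_of_nonneg_left (abs_nonneg (p + q)))
  · simpa [← sub_eq_add_neg] using hopp (by simpa using hxy)
  · simpa [← sub_eq_neg_add, abs_sub_comm] using hopp (by simpa using hxy)
  · rw [← abs_neg, ← abs_neg (_ * p ^ 2 + _)]
    simpa [add_comm] using hsame.trans (le_add_of_nonneg_left (abs_nonneg (-p + -q)))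

section Bracket

lemma zbr_eq_max (i : ℤ) : zbr i = max |(i : ℝ)| 1 := by
  simp [zbr, Nat.cast_natAbs]

lemma one_le_zbr (i : ℤ) : 1 ≤ zbr i := zbr_eq_max i ▸ le_max_right _ _

lemma zbr_pos (i : ℤ) : 0 < zbr i := one_pos.trans_le (one_le_zbr i)

lemma abs_le_zbr (i : ℤ) : |(i : ℝ)| ≤ zbr i := zbr_eq_max i ▸ le_max_left _ _

lemma zbr_le_iff {i : ℤ} {y : ℝ} : zbr i ≤ y ↔ |(i : ℝ)| ≤ y ∧ 1 ≤ y := by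
  rw [zbr_eq_max, max_le_iff]

lemma zbr_le_zbr {i k : ℤ} (h : |i| ≤ |k|) : zbr i ≤ zbr k :=
  zbr_le_iff.2 ⟨le_trans (by exact_mod_cast h) (abs_le_zbr k), one_le_zbr k⟩

end Bracket

section SignedMultiset

/-- The signed moment `∑ σ f(p)` of a multiset of particles `(p, σ)`, each consisting of a position
`p : ℤ` and a sign `σ`. It is the momentum for `f = id` and the quadratic moment for
`f = (· ^ 2)`. -/
def signedSum (M : Multiset (ℤ × ℤˣ)) (f : ℤ → ℤ) : ℤ := (M.map fun x => x.2 * f x.1).sum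

/-- The number of positive particles at `i` minus the number of negative ones, encoded as the
signed moment of the indicator of `i`. -/
def netCharge (M : Multiset (ℤ × ℤˣ)) (i : ℤ) : ℤ := signedSum M (Pi.single i 1)

/-- The sum of `⟨p⟩ ^ s` over the particles `(p, σ)` of `M`, regardless of sign. -/
noncomputable def bracketSum (s : ℝ) (M : Multiset (ℤ × ℤˣ)) : ℝ :=
  (M.map fun x => zbr x.1 ^ s).sum

variable {x y : ℤ × ℤˣ} {M t : Multiset (ℤ × ℤˣ)} {θ : ℝ}

lemma signedSum_cons (f : ℤ → ℤ) : signedSum (x ::ₘ M) f = x.2 * f x.1 + signedSum M f := by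
  simp [signedSum]

lemma bracketSum_cons (s : ℝ) : bracketSum s (x ::ₘ M) = zbr x.1 ^ s + bracketSum s M := by
  simp [bracketSum]

lemma abs_signedSum_le (f : ℤ → ℤ) : |signedSum M f| ≤ (M.map fun x => |f x.1|).sum := by
  simpa [signedSum, Function.comp_def, abs_mul, Int.isUnit_iff_abs_eq.1 (Units.isUnit _)] using
    Multiset.abs_sum_le_sum_abs (s := M.map fun x => (x.2 : ℤ) * f x.1)

lemma netCharge_cons_cons_neg (p : ℤ) (σ : ℤˣ) :
    netCharge ((p, -σ) ::ₘ (p, σ) ::ₘ t) = netCharge t := by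
  ext i
  simp [netCharge, signedSum_cons]

lemma sum_abs_netCharge_mul_le {R : Type*} [CommRing R] [LinearOrder R] [IsStrictOrderedRing R]
    (K : Finset ℤ) {w : ℤ → R} (hw : 0 ≤ w) :
    ∑ i ∈ K, |(netCharge M i : R)| * w i ≤ (M.map fun x => w x.1).sum := by
  induction M using Multiset.induction_on with
  | empty => simp [netCharge, signedSum]
  | cons x M ih =>
    have hcons (i : ℤ) : |(netCharge (x ::ₘ M) i : R)| * w i ≤
        (if i = x.1 then w i else 0) + |(netCharge M i : R)| * w i := by
      rw [netCharge, signedSum_cons, ← netCharge]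
      split_ifs with hi
      · subst hi
        have hσ : |((x.2 : ℤ) : R)| = 1 := by
          exact_mod_cast Int.isUnit_iff_abs_eq.1 x.2.isUnit
        rw [Pi.single_eq_same, mul_one, Int.cast_add, ← one_add_mul, ← hσ]
        exact mul_le_mul_of_nonneg_right (abs_add_le _ _) (hw _)
      · simp [Pi.single_eq_of_ne' hi]
    calc ∑ i ∈ K, |(netCharge (x ::ₘ M) i : R)| * w i
        ≤ ∑ i ∈ K, ((if i = x.1 then w i else 0) + |(netCharge M i : R)| * w i) :=
          Finset.sum_le_sum fun i _ => hcons i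
      _ ≤ w x.1 + (M.map fun x => w x.1).sum := by
          rw [Finset.sum_add_distrib, Finset.sum_ite_eq']
          refine add_le_add ?_ ih
          split_ifs
          · rfl
          · exact hw _
      _ = _ := by simp

lemma finsum_abs_netCharge_mul_le {R : Type*} [CommRing R] [LinearOrder R]
    [IsStrictOrderedRing R] {w : ℤ → R} (hw : 0 ≤ w) :
    ∑ᶠ i, |(netCharge M i : R)| * w i ≤ (M.map fun x => w x.1).sum := by
  have hsupp : (Function.support fun i => |(netCharge M i : R)| * w i) ⊆
      ((M.map Prod.fst).toFinset : Set ℤ) := by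
    intro i hi
    by_contra hiM
    refine hi ?_
    have hzero : netCharge M i = 0 := Multiset.sum_eq_zero fun n hn => by
      obtain ⟨x, hx, rfl⟩ := Multiset.mem_map.1 hn
      have hxi : x.1 ≠ i := fun h => hiM (by simpa using ⟨x.2, h ▸ hx⟩)
      simp [hxi]
    simp [hzero]
  rw [finsum_eq_sum_of_support_subset _ hsupp]
  exact sum_abs_netCharge_mul_le _ hw

lemma bracketSum_le_bracketSum {s r : ℝ} (hsr : s ≤ r) : bracketSum s M ≤ bracketSum r M :=
  Multiset.sum_map_le_sum_map _ _ fun x _ =>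
    Real.rpow_le_rpow_of_exponent_le (one_le_zbr x.1) hsr

lemma card_le_bracketSum {s : ℝ} (hs : 0 ≤ s) : (M.card : ℝ) ≤ bracketSum s M := by
  simpa [bracketSum] using bracketSum_le_bracketSum (M := M) hs

lemma bracketSum_rpow_le (s : ℝ) {r : ℝ} (hr0 : 0 < r) (hr1 : r ≤ 1) :
    bracketSum s M ^ r ≤ bracketSum (s * r) M := by
  have hz (i : ℤ) : 0 ≤ zbr i := (zbr_pos i).le
  refine (sum_rpow_le_sum_map_rpow hr0 hr1 ?_).trans_eq ?_
  · simp only [Multiset.mem_map, forall_exists_index, and_imp, forall_apply_eq_imp_iff₂]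
    exact fun x _ => Real.rpow_nonneg (hz x.1) s
  · simp only [bracketSum, Multiset.map_map, Function.comp_def, Real.rpow_mul (hz _)]

lemma zbr_le_bracketSum_one (hmom : signedSum (x ::ₘ M) id = 0) (hM : M ≠ 0) :
    zbr x.1 ≤ bracketSum 1 M := by
  have hx : |x.1| ≤ (M.map fun u => |u.1|).sum := by
    have hsolve : (x.2 : ℤ) * x.1 = -signedSum M id := by
      rw [signedSum_cons] at hmom
      exact eq_neg_of_add_eq_zero_left hmom
    calc |x.1| = |(x.2 : ℤ) * x.1| := by
          rw [abs_mul, Int.isUnit_iff_abs_eq.1 x.2.isUnit, one_mul]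
      _ ≤ (M.map fun u => |u.1|).sum := by rw [hsolve, abs_neg]; exact abs_signedSum_le id
  refine zbr_le_iff.2 ⟨?_, ?_⟩
  · calc |(x.1 : ℝ)| ≤ (M.map fun u => |(u.1 : ℝ)|).sum := by
          have := Int.cast_le (R := ℝ).2 hx
          simpa [Multiset.map_map, Function.comp_def] using this
      _ ≤ bracketSum 1 M := Multiset.sum_map_le_sum_map _ _ fun u _ => by
          rw [Real.rpow_one]; exact abs_le_zbr u.1
  · calc (1 : ℝ) ≤ M.card := by exact_mod_cast Multiset.card_pos.2 hM
      _ ≤ bracketSum 1 M := card_le_bracketSum zero_le_one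

lemma zbr_rpow_le_add (h0 : 0 ≤ θ) (h1 : θ ≤ 1) (hmom : signedSum (x ::ₘ y ::ₘ t) id = 0)
    (ht : ∀ u ∈ t, |u.1| ≤ |y.1|) :
    zbr x.1 ^ θ ≤ zbr y.1 ^ θ + (2 ^ θ - 1) * bracketSum θ t := by
  have hx : zbr x.1 ≤ zbr y.1 + (t.map fun u => zbr u.1).sum := by
    simpa [bracketSum] using zbr_le_bracketSum_one hmom Multiset.cons_ne_zero
  have hy : ∀ z ∈ t.map fun u => zbr u.1, 0 ≤ z ∧ z ≤ zbr y.1 := by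
    simp only [Multiset.mem_map, forall_exists_index, and_imp, forall_apply_eq_imp_iff₂]
    exact fun u hu => ⟨(zbr_pos u.1).le, zbr_le_zbr (ht u hu)⟩
  calc zbr x.1 ^ θ ≤ (zbr y.1 + (t.map fun u => zbr u.1).sum) ^ θ :=
        Real.rpow_le_rpow (zbr_pos _).le hx h0
    _ ≤ zbr y.1 ^ θ + (2 ^ θ - 1) * bracketSum θ t := by
        simpa [bracketSum, Function.comp_def] using add_sum_rpow_le h0 h1 hy

lemma abs_le_sum_abs_add_sq_add_six (hmom : signedSum (x ::ₘ y ::ₘ t) id = 0)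
    (hsq : |signedSum (x ::ₘ y ::ₘ t) (· ^ 2)| ≤ 2 * (x ::ₘ y ::ₘ t).card)
    (hxy : x ≠ (y.1, -y.2)) (ht : t ≠ 0) :
    |x.1| ≤ (t.map fun u => |u.1| + u.1 ^ 2 + 6).sum := by
  simp only [signedSum_cons, id_eq, ← add_assoc, Multiset.card_cons, Nat.cast_add,
    Nat.cast_one] at hmom hsq
  have hcard : (1 : ℤ) ≤ t.card := by exact_mod_cast Multiset.card_pos.2 ht
  have hlin : |(x.2 : ℤ) * x.1 + y.2 * y.1| ≤ (t.map fun u => |u.1|).sum := by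
    rw [eq_neg_of_add_eq_zero_left hmom, abs_neg]
    exact abs_signedSum_le id
  have hquad : |(x.2 : ℤ) * x.1 ^ 2 + y.2 * y.1 ^ 2| ≤
      2 * (t.card + 2) + (t.map fun u => u.1 ^ 2).sum := by
    have htail : |signedSum t (· ^ 2)| ≤ (t.map fun u => u.1 ^ 2).sum :=
      (abs_signedSum_le _).trans_eq (by simp only [abs_sq])
    have htri := abs_sub (x.2 * x.1 ^ 2 + y.2 * y.1 ^ 2 + signedSum t (· ^ 2))
      (signedSum t (· ^ 2))
    rw [add_sub_cancel_right] at htri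
    linarith
  calc |x.1| ≤ _ := abs_le_abs_signed_add_abs_signed_sq hxy
    _ ≤ (t.map fun u => |u.1|).sum + (2 * (t.card + 2) + (t.map fun u => u.1 ^ 2).sum) :=
        add_le_add hlin hquad
    _ ≤ (t.map fun u => |u.1|).sum + (t.map fun u => u.1 ^ 2).sum + t.card * 6 := by linarith
    _ = (t.map fun u => |u.1| + u.1 ^ 2 + 6).sum := by simp [Multiset.sum_map_add]

lemma zbr_le_eight_mul_bracketSum_two (hmom : signedSum (x ::ₘ y ::ₘ t) id = 0)
    (hsq : |signedSum (x ::ₘ y ::ₘ t) (· ^ 2)| ≤ 2 * (x ::ₘ y ::ₘ t).card)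
    (hxy : x ≠ (y.1, -y.2)) (ht : t ≠ 0) : zbr x.1 ≤ 8 * bracketSum 2 t := by
  have hterm (i : ℤ) : |(i : ℝ)| + (i : ℝ) ^ 2 + 6 ≤ 8 * zbr i ^ (2 : ℝ) := by
    rw [Real.rpow_two, ← sq_abs (i : ℝ)]
    nlinarith [one_le_zbr i, abs_le_zbr i, abs_nonneg (i : ℝ)]
  refine zbr_le_iff.2 ⟨?_, ?_⟩
  · calc |(x.1 : ℝ)| ≤ (t.map fun u => |(u.1 : ℝ)| + (u.1 : ℝ) ^ 2 + 6).sum := by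
          have := Int.cast_le (R := ℝ).2 (abs_le_sum_abs_add_sq_add_six hmom hsq hxy ht)
          simpa [Multiset.map_map, Function.comp_def] using this
      _ ≤ (t.map fun u => 8 * zbr u.1 ^ (2 : ℝ)).sum :=
          Multiset.sum_map_le_sum_map _ _ fun u _ => hterm u.1
      _ = 8 * bracketSum 2 t := Multiset.sum_map_mul_left
  · have hcard : (1 : ℝ) ≤ t.card := by exact_mod_cast Multiset.card_pos.2 ht
    linarith [card_le_bracketSum (M := t) zero_le_two]

lemma zbr_rpow_half_le (h0 : 0 < θ) (h1 : θ ≤ 1) (hmom : signedSum (x ::ₘ y ::ₘ t) id = 0)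
    (hsq : |signedSum (x ::ₘ y ::ₘ t) (· ^ 2)| ≤ 2 * (x ::ₘ y ::ₘ t).card)
    (hxy : x ≠ (y.1, -y.2)) (ht : t ≠ 0) : zbr x.1 ^ (θ / 2) ≤ 3 * bracketSum θ t := by
  have hconst : (8 : ℝ) ^ (θ / 2) ≤ 3 := by
    calc (8 : ℝ) ^ (θ / 2) ≤ 9 ^ (θ / 2) :=
          Real.rpow_le_rpow (by norm_num) (by norm_num) (by linarith)
      _ ≤ 9 ^ (1 / 2 : ℝ) := Real.rpow_le_rpow_of_exponent_le (by norm_num) (by linarith)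
      _ = 3 := by rw [← Real.sqrt_eq_rpow, Real.sqrt_eq_iff_mul_self_eq] <;> norm_num
  have hT : 0 ≤ bracketSum 2 t := (Nat.cast_nonneg _).trans (card_le_bracketSum zero_le_two)
  calc zbr x.1 ^ (θ / 2) ≤ (8 * bracketSum 2 t) ^ (θ / 2) :=
        Real.rpow_le_rpow (zbr_pos _).le (zbr_le_eight_mul_bracketSum_two hmom hsq hxy ht)
          (by linarith)
    _ = 8 ^ (θ / 2) * bracketSum 2 t ^ (θ / 2) := Real.mul_rpow (by norm_num) hT
    _ ≤ 3 * bracketSum (2 * (θ / 2)) t :=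
        mul_le_mul hconst (bracketSum_rpow_le 2 (by linarith) (by linarith))
          (Real.rpow_nonneg hT _) (by norm_num)
    _ = 3 * bracketSum θ t := by rw [mul_div_cancel₀ θ two_ne_zero]

lemma finsum_abs_netCharge_mul_rpow_half_le (h0 : 0 < θ) (h1 : θ ≤ 1)
    (hmom : signedSum (x ::ₘ y ::ₘ t) id = 0)
    (hsq : |signedSum (x ::ₘ y ::ₘ t) (· ^ 2)| ≤ 2 * (x ::ₘ y ::ₘ t).card)
    (hyx : |y.1| ≤ |x.1|) (ht : t ≠ 0) :
    ∑ᶠ i, |(netCharge (x ::ₘ y ::ₘ t) i : ℝ)| * zbr i ^ (θ / 2) ≤ 7 * bracketSum θ t := by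
  have hweight : (0 : ℤ → ℝ) ≤ fun i => zbr i ^ (θ / 2) :=
    fun i => Real.rpow_nonneg (zbr_pos i).le _
  have htail : bracketSum (θ / 2) t ≤ bracketSum θ t := bracketSum_le_bracketSum (by linarith)
  by_cases hxy : x = (y.1, -y.2)
  · have hS : 0 ≤ bracketSum θ t := (Nat.cast_nonneg _).trans (card_le_bracketSum h0.le)
    rw [hxy, netCharge_cons_cons_neg]
    calc _ ≤ bracketSum (θ / 2) t := finsum_abs_netCharge_mul_le hweight
      _ ≤ 7 * bracketSum θ t := by linarith
  · have hx := zbr_rpow_half_le h0 h1 hmom hsq hxy ht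
    have hy : zbr y.1 ^ (θ / 2) ≤ zbr x.1 ^ (θ / 2) :=
      Real.rpow_le_rpow (zbr_pos _).le (zbr_le_zbr hyx) (by linarith)
    calc _ ≤ bracketSum (θ / 2) (x ::ₘ y ::ₘ t) := finsum_abs_netCharge_mul_le hweight
      _ = zbr x.1 ^ (θ / 2) + (zbr y.1 ^ (θ / 2) + bracketSum (θ / 2) t) := by
          rw [bracketSum_cons, bracketSum_cons]
      _ ≤ 7 * bracketSum θ t := by linarith

theorem finsum_abs_netCharge_mul_rpow_half_le_sub (h0 : 0 < θ) (h1 : θ < 1) (hM : 3 ≤ M.card)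
    (hmom : signedSum M id = 0) (hsq : |signedSum M (· ^ 2)| ≤ 2 * M.card) {z : ℤ × ℤˣ}
    (hz : z ∈ M) :
    ∑ᶠ i, |(netCharge M i : ℝ)| * zbr i ^ (θ / 2) ≤
      7 / (2 - 2 ^ θ) * (bracketSum θ M - 2 * zbr z.1 ^ θ) := by
  obtain ⟨x, y, t, rfl, hyx, hty⟩ :=
    exists_two_largest (fun u : ℤ × ℤˣ => |u.1|) (Nat.le_of_succ_le hM)
  have ht : t ≠ 0 := by rintro rfl; simp at hM
  have hzx : |z.1| ≤ |x.1| := by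
    rcases Multiset.mem_cons.1 hz with rfl | hz
    · rfl
    rcases Multiset.mem_cons.1 hz with rfl | hz
    exacts [hyx, (hty z hz).trans hyx]
  have hzpow : zbr z.1 ^ θ ≤ zbr x.1 ^ θ :=
    Real.rpow_le_rpow (zbr_pos _).le (zbr_le_zbr hzx) h0.le
  have hpos : 0 < 2 - (2 : ℝ) ^ θ := sub_pos.2 <| by
    simpa using Real.rpow_lt_rpow_of_exponent_lt one_lt_two h1
  have htail : (2 - (2 : ℝ) ^ θ) * bracketSum θ t ≤
      bracketSum θ (x ::ₘ y ::ₘ t) - 2 * zbr z.1 ^ θ := by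
    rw [bracketSum_cons, bracketSum_cons]
    linarith [zbr_rpow_le_add h0.le h1.le hmom hty]
  calc _ ≤ 7 * bracketSum θ t :=
        finsum_abs_netCharge_mul_rpow_half_le h0 h1.le hmom hsq hyx ht
    _ = 7 / (2 - 2 ^ θ) * ((2 - 2 ^ θ) * bracketSum θ t) := by field_simp
    _ ≤ _ := mul_le_mul_of_nonneg_left htail (by positivity)

end SignedMultiset

section Particles

/-- The multiset of particles encoding the pair `(α, β)`: each `i` occurs `α i` times with sign `1`
and `β i` times with sign `-1`. -/
noncomputable def particles (α β : Idx) : Multiset (ℤ × ℤˣ) :=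
  (Finsupp.toMultiset α).map (·, 1) + (Finsupp.toMultiset β).map (·, -1)

variable {α β : Idx}

lemma exists_mem_particles {j : ℤ} (hj : α j + β j ≠ 0) : ∃ x ∈ particles α β, x.1 = j := by
  simp only [particles, Multiset.mem_add, Multiset.mem_map, Finsupp.mem_toMultiset,
    Finsupp.mem_support_iff]
  by_cases hα : α j = 0
  · exact ⟨(j, -1), Or.inr ⟨j, by omega, rfl⟩, rfl⟩
  · exact ⟨(j, 1), Or.inl ⟨j, hα, rfl⟩, rfl⟩

lemma card_particles : (particles α β).card = wt α + wt β := by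
  simp [particles, wt, Finsupp.sum]

lemma sum_map_particles {A : Type*} [AddCommMonoid A] (F : ℤ × ℤˣ → A) :
    ((particles α β).map F).sum =
      Finsupp.weight (fun i => F (i, 1)) α + Finsupp.weight (fun i => F (i, -1)) β := by
  simp [particles, sum_map_toMultiset]

lemma sum_map_particles_eq_finsum {A : Type*} [AddCommMonoid A] (F : ℤ × ℤˣ → A) :
    ((particles α β).map F).sum = ∑ᶠ i, (α i • F (i, 1) + β i • F (i, -1)) := by
  rw [sum_map_particles, weight_eq_finsum, weight_eq_finsum, finsum_add_distrib]
  exacts [α.hasFiniteSupport.subset (Function.support_smul_subset_left α fun i => F (i, 1)),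
    β.hasFiniteSupport.subset (Function.support_smul_subset_left β fun i => F (i, -1))]

lemma signedSum_particles (f : ℤ → ℤ) :
    signedSum (particles α β) f = ∑ᶠ i, ((α i : ℤ) - β i) * f i := by
  rw [signedSum, sum_map_particles_eq_finsum]
  exact finsum_congr fun i => by simp [sub_mul, ← sub_eq_add_neg]

lemma signedSum_id_particles : signedSum (particles α β) id = mom α β := by
  simp [signedSum, sum_map_particles, Finsupp.weight_apply, mom, sub_eq_add_neg, mul_comm]

lemma netCharge_particles (i : ℤ) : netCharge (particles α β) i = α i - β i := by
  rw [netCharge, signedSum_particles, finsum_eq_single _ i (fun k hk => by simp [hk])]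
  simp

lemma bracketSum_particles (s : ℝ) :
    bracketSum s (particles α β) = ∑ᶠ i, ((α i + β i : ℕ) : ℝ) * zbr i ^ s := by
  rw [bracketSum, sum_map_particles_eq_finsum]
  exact finsum_congr fun i => by simp [add_mul]

lemma finsum_abs_sub_le_wt_add_wt : ∑ᶠ i, |(α i : ℤ) - β i| ≤ ((wt α + wt β : ℕ) : ℤ) := by
  simpa [netCharge_particles, card_particles] using
    finsum_abs_netCharge_mul_le (M := particles α β) (w := fun _ => (1 : ℤ)) zero_le_one

end Particles

theorem divisor_weight_comparison_general {θ : ℝ} (h0 : 0 < θ) (h1 : θ < 1) {α β : Idx}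
    (hmom : mom α β = 0) (hN : 3 ≤ wt α + wt β)
    (hsq : |∑ᶠ i : ℤ, ((α i : ℤ) - β i) * i ^ 2| ≤ 2 * ((wt α + wt β : ℕ) : ℤ)) {j : ℤ}
    (hj : α j + β j ≠ 0) :
    ∑ᶠ i : ℤ, |(α i : ℝ) - β i| * zbr i ^ (θ / 2) ≤
      7 / (2 - 2 ^ θ) * (∑ᶠ i : ℤ, ((α i + β i : ℕ) : ℝ) * zbr i ^ θ - 2 * zbr j ^ θ) := by
  obtain ⟨z, hz, rfl⟩ := exists_mem_particles hj
  rw [← card_particles] at hN hsq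
  rw [← signedSum_particles (· ^ 2)] at hsq
  rw [← signedSum_id_particles] at hmom
  simpa [netCharge_particles, bracketSum_particles] using
    finsum_abs_netCharge_mul_rpow_half_le_sub h0 h1 hN hmom hsq hz

/-- Lemma `constance 2 gen`: with `C_* = 7/(2−2^θ)`,
momentum conservation, `α ≠ β`, `|α|+|β| ≥ 3` and
`|∑_i (α_i−β_i) i²| ≤ 2 ∑_i |α_i−β_i|`, for every `j` with `α_j+β_j ≠ 0`,
`∑_i |α_i−β_i| ⟨i⟩^{θ/2} ≤ C_* (∑_i (α_i+β_i) ⟨i⟩^θ − 2⟨j⟩^θ)`. -/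
theorem divisor_weight_comparison (θ : ℝ) (hθ0 : 0 < θ) (hθ1 : θ < 1)
    (α β : Idx) (hmom : mom α β = 0) (hne : α ≠ β) (hN : 3 ≤ wt α + wt β)
    (h : |∑ᶠ i : ℤ, ((α i : ℤ) - (β i : ℤ)) * i ^ 2| ≤
      2 * ∑ᶠ i : ℤ, |(α i : ℤ) - (β i : ℤ)|)
    (j : ℤ) (hj : α j + β j ≠ 0) :
    (∑ᶠ i : ℤ, |(α i : ℝ) - (β i : ℝ)| * zbr i ^ (θ / 2)) ≤
      (7 / (2 - (2 : ℝ) ^ θ)) *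
        ((∑ᶠ i : ℤ, ((α i + β i : ℕ) : ℝ) * zbr i ^ θ) - 2 * zbr j ^ θ) := by
  have hsq := h.trans (mul_le_mul_of_nonneg_left finsum_abs_sub_le_wt_add_wt zero_le_two)
  exact divisor_weight_comparison_general hθ0 hθ1 hmom hN hsq hj
end
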